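/- arXiv:1801.00521 — 4 statements merged into one kernel-verified Lean document; each statement's English description precedes it below -/
import Mathlib

section
/- Fix α > 0, β > 0 and an integer n ≥ 1, and define σ_n(t) := t(t−1) · d/dt log D_n(t, α, β) + d₁ t + d₂ for t ∈ (0,1), where d₁ := −(2n+α+β)²/4 and d₂ := ( 2n(n+α+β) + β(α+β) )/4. Then σ_n is twice differentiable on (0,1) and satisfies, for all t ∈ (0,1), the Jimbo–Miwa–Okamoto σ-form of Painlevé VI: σ_n' · ( t(t−1) σ_n'' )² + ( 2 σ_n' ( t σ_n' − σ_n ) − (σ_n')² − ν₁ν₂ν₃ν₄ )² = ( σ_n' + ν₁² )( σ_n' + ν₂² )( σ_n' + ν₃² )( σ_n' + ν₄² ), with parameters ν₁ = (α+β)/2, ν₂ = (β−α)/2, ν₃ = ν₄ = (2n+α+β)/2, where primes denote derivatives with respect to t. -/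
/-!
The proof is the isomonodromy argument at fixed `n`, carried out with explicit integrals.

Let `w` be the Jacobi weight and `ℓ f = ∫ₜ¹ f w`, and let `P`, `Q` be the orthogonal polynomials of
degrees `n`, `n - 1`, with `P` monic and `Q` normalised by `ℓ (Q X ^ (n - 1)) = 1`. With the
Christoffel–Darboux formula `(z - y) K(z, y) = P(z) Q(y) - Q(z) P(y)` and integration by parts one
finds that `(P, Q)` solves a Fuchsian system in `z` with poles `0, t, 1`, whose residues at
`s = 0, 1` have as entries the integrals of `P²`, `PQ`, `Q²` against `w / (x - s)`, and whose
residue at `t` is built from `w(t)`, `P(t)`, `Q(t)`. The system itself is never written down; only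
the following consequences are used.

* The sum of the residues is diagonal and constant (`OrthData.sum_PP`, `sum_PQ`, `sum_QQ`).
* Each residue is singular (`OrthData.residue_det`), since it annihilates the nonzero vector
  `(P(s), Q(s))`.
* `∂ₜ P = w(t) P(t) K(t, ·)` and `∂ₜ Q = w(t) Q(t) K(t, ·)` (`polyDeriv_eq`), so the residues satisfy
  the Schlesinger equations (`schlesinger`).
* `∂ₜ log Dₙ = -w(t) K(t, t)` (`hasDerivAt_det_hankel`), and `K(t, t)` is expressed through the
  residues (`OrthData.K_diag`), so `t (t - 1) ∂ₜ log Dₙ` is the Hamiltonian of the Schlesinger system.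

The σ-form is then algebra (`sigma_form_of_schlesinger`). Writing `x`, `y` for the traces of the
products of the residue at `t` with the residues at `0` and at `1`, one has `σ' = x + y - N²` with
`N = (2n + α + β) / 2`, the quantity `t (t - 1) σ''` is up to sign the triple product of the three
residues in `sl₂`, and its square is a Gram determinant, a cubic polynomial in `x` and `y`. As `x`
and `y` are affine in `σ`, `σ'` for fixed `t`, this is the asserted equation.
-/

open MeasureTheory intervalIntegral

/-- The `n × n` Hankel determinant of the Jacobi weight `x^α (1-x)^β`
restricted to `[t, 1]`. -/
noncomputable def jacobiHankel (n : ℕ) (t α β : ℝ) : ℝ :=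
  Matrix.det (Matrix.of fun i j : Fin n =>
    ∫ x in t..1, x ^ (((i : ℕ) : ℝ) + ((j : ℕ) : ℝ) + α) * (1 - x) ^ β)

namespace JacobiPVI

open Polynomial

/-! ### Orthogonal polynomials of a linear functional -/

/-- Orthogonality data of order `n` for a linear functional `ℓ` on polynomials: `P` is the monic
orthogonal polynomial of degree `n`, `Q` is the orthogonal polynomial of degree `n - 1` normalised
by `ℓ (Q * X ^ (n - 1)) = 1` (not monic), and `K z` is the Christoffel–Darboux kernel `K(z, ·)`,
characterised by its reproducing property. -/
structure OrthData (n : ℕ) (ℓ : ℝ[X] →ₗ[ℝ] ℝ) (P Q : ℝ[X]) (K : ℝ → ℝ[X]) : Prop where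
  P_monic : P - X ^ n ∈ degreeLT ℝ n
  P_orth : ∀ f ∈ degreeLT ℝ n, ℓ (P * f) = 0
  Q_mem : Q ∈ degreeLT ℝ n
  Q_orth : ∀ f ∈ degreeLT ℝ n, ℓ (Q * f) = f.coeff (n - 1)
  K_mem : ∀ z, K z ∈ degreeLT ℝ n
  K_rep : ∀ z, ∀ f ∈ degreeLT ℝ n, ℓ (K z * f) = f.eval z

theorem mem_degreeLT_iff_coeff {n : ℕ} {f : ℝ[X]} :
    f ∈ degreeLT ℝ n ↔ ∀ k, n ≤ k → f.coeff k = 0 := by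
  rw [mem_degreeLT, degree_lt_iff_coeff_zero]

theorem X_pow_mem_degreeLT {n k : ℕ} (h : k < n) : (X ^ k : ℝ[X]) ∈ degreeLT ℝ n := by
  rw [mem_degreeLT_iff_coeff]
  intro j hj
  rw [coeff_X_pow, if_neg (by omega)]

theorem eqOn_degreeLT {n : ℕ} {φ ψ : ℝ[X] →ₗ[ℝ] ℝ} (h : ∀ k < n, φ (X ^ k) = ψ (X ^ k)) :
    ∀ f ∈ degreeLT ℝ n, φ f = ψ f := by
  classical
  intro f hf
  rw [degreeLT_eq_span_X_pow] at hf
  refine LinearMap.eqOn_span ?_ hf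
  intro g hg
  simp only [Finset.coe_image, Finset.coe_range, Set.mem_image, Set.mem_Iio] at hg
  obtain ⟨k, hk, rfl⟩ := hg
  exact h k hk

theorem derivative_mem_degreeLT {n : ℕ} {f : ℝ[X]} (hf : f ∈ degreeLT ℝ n) :
    derivative f ∈ degreeLT ℝ n ∧ (derivative f).coeff (n - 1) = 0 := by
  rw [mem_degreeLT_iff_coeff] at *
  constructor
  · intro k hk
    rw [coeff_derivative, hf _ (by omega), zero_mul]
  · rw [coeff_derivative, hf _ (by omega), zero_mul]

theorem map_C_mul' (ℓ : ℝ[X] →ₗ[ℝ] ℝ) (c : ℝ) (f : ℝ[X]) : ℓ (C c * f) = c * ℓ f := by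
  rw [← smul_eq_C_mul, map_smul, smul_eq_mul]

namespace OrthData

variable {n : ℕ} {ℓ : ℝ[X] →ₗ[ℝ] ℝ} {P Q : ℝ[X]} {K : ℝ → ℝ[X]}

/-- Nondegeneracy of `ℓ` in degrees `< n`. -/
theorem eq_zero (H : OrthData n ℓ P Q K) {R : ℝ[X]} (hR : R ∈ degreeLT ℝ n)
    (h : ∀ k < n, ℓ (R * X ^ k) = 0) : R = 0 := by
  have h' : ∀ f ∈ degreeLT ℝ n, (ℓ ∘ₗ LinearMap.mulLeft ℝ R) f = (0 : ℝ[X] →ₗ[ℝ] ℝ) f :=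
    eqOn_degreeLT (fun k hk => by simpa using h k hk)
  refine Polynomial.funext fun z => ?_
  rw [← H.K_rep z R hR, mul_comm, eval_zero]
  simpa using h' (K z) (H.K_mem z)

theorem P_coeff_n (H : OrthData n ℓ P Q K) : P.coeff n = 1 := by
  have := mem_degreeLT_iff_coeff.1 H.P_monic n le_rfl
  simp at this
  linarith

theorem P_coeff_gt (H : OrthData n ℓ P Q K) {k : ℕ} (hk : n < k) : P.coeff k = 0 := by
  have := mem_degreeLT_iff_coeff.1 H.P_monic k hk.le
  rw [coeff_sub, coeff_X_pow, if_neg (by omega)] at this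
  linarith

theorem derivative_P_mem (H : OrthData n ℓ P Q K) : derivative P ∈ degreeLT ℝ n := by
  rw [mem_degreeLT_iff_coeff]
  intro k hk
  rw [coeff_derivative, H.P_coeff_gt (by omega), zero_mul]

theorem K_coeff (H : OrthData n ℓ P Q K) (z : ℝ) : (K z).coeff (n - 1) = Q.eval z := by
  rw [← H.Q_orth _ (H.K_mem z), mul_comm, H.K_rep z _ H.Q_mem]

/-- The Christoffel–Darboux formula. -/
theorem christoffel_darboux (H : OrthData n ℓ P Q K) (hn : 1 ≤ n) (z : ℝ) :
    (C z - X) * K z = C (P.eval z) * Q - C (Q.eval z) * P := by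
  have hK := mem_degreeLT_iff_coeff.1 (H.K_mem z)
  have hQ := mem_degreeLT_iff_coeff.1 H.Q_mem
  obtain ⟨m, rfl⟩ : ∃ m, n = m + 1 := ⟨n - 1, by omega⟩
  have hKc := H.K_coeff z
  simp only [Nat.add_sub_cancel] at hKc
  suffices h : (C z - X) * K z - (C (P.eval z) * Q - C (Q.eval z) * P) = 0 from sub_eq_zero.1 h
  have hKX : ∀ k < m + 1, ℓ (K z * X ^ k) = z ^ k := fun k hk => by
    rw [H.K_rep z _ (X_pow_mem_degreeLT hk)]; simp
  apply H.eq_zero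
  · rw [mem_degreeLT_iff_coeff]
    intro k hk
    obtain ⟨j, rfl⟩ : ∃ j, k = j + 1 := ⟨k - 1, by omega⟩
    simp only [sub_mul, coeff_sub, coeff_C_mul, coeff_X_mul, hK (j + 1) hk, hQ (j + 1) hk]
    rcases (show m = j ∨ m < j by omega) with h | h
    · subst h
      rw [hKc, H.P_coeff_n]; ring
    · rw [hK j (by omega), H.P_coeff_gt (by omega)]; ring
  · intro k hk
    have e : ((C z - X) * K z - (C (P.eval z) * Q - C (Q.eval z) * P)) * X ^ k
        = C z * (K z * X ^ k) - K z * X ^ (k + 1)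
          - (C (P.eval z) * (Q * X ^ k) - C (Q.eval z) * (P * X ^ k)) := by ring
    rw [e, map_sub, map_sub, map_sub, map_C_mul', map_C_mul', map_C_mul', hKX k hk,
      H.P_orth _ (X_pow_mem_degreeLT hk), H.Q_orth _ (X_pow_mem_degreeLT hk)]
    rcases (show k = m ∨ k < m by omega) with h | h
    · subst h
      -- `X ^ n = P - (P - X ^ n)`, where `P` is orthogonal to `K z`
      have e2 : K z * X ^ (k + 1) = P * K z - K z * (P - X ^ (k + 1)) := by ring
      rw [e2, map_sub, H.P_orth _ (H.K_mem z), H.K_rep z _ H.P_monic]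
      simp
      ring
    · rw [hKX (k + 1) (by omega), coeff_X_pow, if_neg (by omega)]
      ring

variable {s : ℝ} {ℓs : ℝ[X] →ₗ[ℝ] ℝ}

/-- `P` paired with the kernel against the functional `ℓs`, which stands for `f ↦ ℓ (f / (X - s))`.
-/
theorem pairing_P (H : OrthData n ℓ P Q K) (hn : 1 ≤ n)
    (hs : ∀ f, ℓs ((X - C s) * f) = ℓ f) (z : ℝ) :
    (z - s) * ℓs (P * K z) = P.eval z * ℓs (P * Q) - Q.eval z * ℓs (P * P) := by
  have e : C (z - s) * (P * K z) = P * ((C z - X) * K z) + (X - C s) * (P * K z) := by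
    rw [C_sub]; ring
  have e2 : P * ((C z - X) * K z) = C (P.eval z) * (P * Q) - C (Q.eval z) * (P * P) := by
    rw [H.christoffel_darboux hn]; ring
  rw [← map_C_mul', e, map_add, hs, H.P_orth _ (H.K_mem z), e2, map_sub, map_C_mul', map_C_mul']
  ring

theorem pairing_Q (H : OrthData n ℓ P Q K) (hn : 1 ≤ n)
    (hs : ∀ f, ℓs ((X - C s) * f) = ℓ f) (z : ℝ) :
    (z - s) * ℓs (Q * K z)
      = Q.eval z + P.eval z * ℓs (Q * Q) - Q.eval z * ℓs (P * Q) := by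
  have e : C (z - s) * (Q * K z) = Q * ((C z - X) * K z) + (X - C s) * (Q * K z) := by
    rw [C_sub]; ring
  have e2 : Q * ((C z - X) * K z) = C (P.eval z) * (Q * Q) - C (Q.eval z) * (P * Q) := by
    rw [H.christoffel_darboux hn]; ring
  rw [← map_C_mul', e, map_add, hs, H.Q_orth _ (H.K_mem z), H.K_coeff, e2, map_sub, map_C_mul',
    map_C_mul']
  ring

/-- The residue matrix at the pole `s` is singular: it annihilates the vector
`(P(s), Q(s))`, which is nonzero because `K(s, ·) ≠ 0`. -/
theorem residue_det (H : OrthData n ℓ P Q K) (hn : 1 ≤ n)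
    (hs : ∀ f, ℓs ((X - C s) * f) = ℓ f) :
    ℓs (P * P) * ℓs (Q * Q) = ℓs (P * Q) * (ℓs (P * Q) - 1) := by
  have h1 := H.pairing_P hn hs s
  have h2 := H.pairing_Q hn hs s
  have h3 : P.eval s ≠ 0 ∨ Q.eval s ≠ 0 := by
    by_contra! hc
    have h4 := H.christoffel_darboux hn s
    rw [hc.1, hc.2] at h4
    simp only [map_zero, zero_mul, sub_zero, mul_eq_zero] at h4
    have h5 : (C s - X : ℝ[X]) ≠ 0 := by
      intro h
      have := congrArg (fun f => coeff f 1) h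
      simp at this
    have h6 := H.K_rep s 1 (by simpa using X_pow_mem_degreeLT (k := 0) hn)
    rw [h4.resolve_left h5] at h6
    simp at h6
  rw [sub_self, zero_mul] at h1 h2
  rcases h3 with h3 | h3
  · apply mul_left_cancel₀ h3
    linear_combination -(ℓs (P * P)) * h2 + (ℓs (P * Q) - 1) * h1
  · apply mul_left_cancel₀ h3
    linear_combination -(ℓs (P * Q)) * h2 + (ℓs (Q * Q)) * h1

variable {α β w t : ℝ} {ℓ₀ ℓ₁ : ℝ[X] →ₗ[ℝ] ℝ}

/-- The sum of the residue matrices is diagonal; this and the next two lemmas are its entries. -/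
theorem sum_PP (H : OrthData n ℓ P Q K)
    (hP : ∀ f, ℓ (derivative f) + α * ℓ₀ f + β * ℓ₁ f = -(w * f.eval t)) :
    α * ℓ₀ (P * P) + β * ℓ₁ (P * P) + w * (P.eval t * P.eval t) = 0 := by
  have h := hP (P * P)
  have e : derivative (P * P) = P * derivative P + P * derivative P := by
    rw [derivative_mul]; ring
  have hd := H.derivative_P_mem
  rw [e, map_add, H.P_orth _ hd, eval_mul] at h
  linarith

theorem sum_QQ (H : OrthData n ℓ P Q K)
    (hP : ∀ f, ℓ (derivative f) + α * ℓ₀ f + β * ℓ₁ f = -(w * f.eval t)) :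
    α * ℓ₀ (Q * Q) + β * ℓ₁ (Q * Q) + w * (Q.eval t * Q.eval t) = 0 := by
  have h := hP (Q * Q)
  have e : derivative (Q * Q) = Q * derivative Q + Q * derivative Q := by
    rw [derivative_mul]; ring
  obtain ⟨hd, hd'⟩ := derivative_mem_degreeLT H.Q_mem
  rw [e, map_add, H.Q_orth _ hd, hd', eval_mul] at h
  linarith

theorem sum_PQ (H : OrthData n ℓ P Q K) (hn : 1 ≤ n)
    (hP : ∀ f, ℓ (derivative f) + α * ℓ₀ f + β * ℓ₁ f = -(w * f.eval t)) :
    α * ℓ₀ (P * Q) + β * ℓ₁ (P * Q) + w * (P.eval t * Q.eval t) = -n := by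
  have h := hP (P * Q)
  have e : derivative (P * Q) = Q * derivative P + P * derivative Q := by
    rw [derivative_mul]; ring
  have hd := H.derivative_P_mem
  have hc : (derivative P).coeff (n - 1) = n := by
    rw [coeff_derivative, Nat.sub_add_cancel hn, H.P_coeff_n]
    push_cast [hn]; ring
  rw [e, map_add, H.P_orth _ (derivative_mem_degreeLT H.Q_mem).1, H.Q_orth _ hd, hc,
    eval_mul] at h
  linarith

/-- The diagonal value `K(t, t)` at the endpoint `t`, from the ladder relations for `P'(t)` and
`Q'(t)` inserted into the confluent Christoffel–Darboux formula. -/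
theorem K_diag (H : OrthData n ℓ P Q K) (hn : 1 ≤ n)
    (hP : ∀ f, ℓ (derivative f) + α * ℓ₀ f + β * ℓ₁ f = -(w * f.eval t)) :
    (K t).eval t = -α * (Q.eval t * ℓ₀ (P * K t) - P.eval t * ℓ₀ (Q * K t))
      - β * (Q.eval t * ℓ₁ (P * K t) - P.eval t * ℓ₁ (Q * K t)) := by
  have hd := H.derivative_P_mem
  obtain ⟨hKd, hKd'⟩ := derivative_mem_degreeLT (H.K_mem t)
  have h1 := hP (P * K t)
  have h2 := hP (Q * K t)
  have e1 : derivative (P * K t) = K t * derivative P + P * derivative (K t) := by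
    rw [derivative_mul]; ring
  have e2 : derivative (Q * K t) = K t * derivative Q + Q * derivative (K t) := by
    rw [derivative_mul]; ring
  rw [e1, map_add, H.P_orth _ hKd, H.K_rep t _ hd, eval_mul] at h1
  rw [e2, map_add, H.Q_orth _ hKd, hKd', H.K_rep t _ (derivative_mem_degreeLT H.Q_mem).1,
    eval_mul] at h2
  have h3 := congrArg (fun f => eval t (derivative f)) (H.christoffel_darboux hn t)
  simp only [derivative_mul, derivative_sub, derivative_C, derivative_X, eval_add, eval_sub,
    eval_mul, eval_C, eval_X, eval_neg, eval_one, sub_self, zero_mul, add_zero, zero_add,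
    zero_sub] at h3
  linear_combination -h3 + Q.eval t * h1 - P.eval t * h2

end OrthData

/-! ### From the Schlesinger system to the σ-form -/

/-- A solution of the Schlesinger system with poles `0, t, 1`. The traceless residue matrices are
`!![-V, U; -W, V]` (at `t`, nilpotent) and the same with indices `0`, `1`; their determinants are
`0`, `-α²/4`, `-β²/4` and their sum is `diag (N, -N)`. The trace form of two such matrices is
`2 V V' - U W' - W U'`. The Hamiltonian of the system, suitably shifted, satisfies the σ-form of
Painlevé VI: its second derivative is a multiple of the triple product of the three matrices, the
square of which is a Gram determinant. -/
theorem sigma_form_of_schlesinger {α β N : ℝ} {U₀ V₀ W₀ U₁ V₁ W₁ U V W σ : ℝ → ℝ}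
    (hU₀ : ∀ t ∈ Set.Ioo (0 : ℝ) 1, HasDerivAt U₀ ((2 * U t * V₀ t - 2 * V t * U₀ t) / t) t)
    (hV₀ : ∀ t ∈ Set.Ioo (0 : ℝ) 1, HasDerivAt V₀ ((U t * W₀ t - W t * U₀ t) / t) t)
    (hW₀ : ∀ t ∈ Set.Ioo (0 : ℝ) 1, HasDerivAt W₀ ((2 * V t * W₀ t - 2 * W t * V₀ t) / t) t)
    (hU₁ : ∀ t ∈ Set.Ioo (0 : ℝ) 1,
      HasDerivAt U₁ ((2 * U t * V₁ t - 2 * V t * U₁ t) / (t - 1)) t)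
    (hV₁ : ∀ t ∈ Set.Ioo (0 : ℝ) 1, HasDerivAt V₁ ((U t * W₁ t - W t * U₁ t) / (t - 1)) t)
    (hW₁ : ∀ t ∈ Set.Ioo (0 : ℝ) 1,
      HasDerivAt W₁ ((2 * V t * W₁ t - 2 * W t * V₁ t) / (t - 1)) t)
    (sU : ∀ t ∈ Set.Ioo (0 : ℝ) 1, U₀ t + U₁ t + U t = 0)
    (sV : ∀ t ∈ Set.Ioo (0 : ℝ) 1, V₀ t + V₁ t + V t = -N)
    (sW : ∀ t ∈ Set.Ioo (0 : ℝ) 1, W₀ t + W₁ t + W t = 0)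
    (d₀ : ∀ t ∈ Set.Ioo (0 : ℝ) 1, V₀ t ^ 2 - U₀ t * W₀ t = α ^ 2 / 4)
    (d₁ : ∀ t ∈ Set.Ioo (0 : ℝ) 1, V₁ t ^ 2 - U₁ t * W₁ t = β ^ 2 / 4)
    (d : ∀ t ∈ Set.Ioo (0 : ℝ) 1, V t ^ 2 - U t * W t = 0)
    (hσ : ∀ t ∈ Set.Ioo (0 : ℝ) 1, σ t =
      (t - 1) * (2 * V t * V₀ t - W t * U₀ t - U t * W₀ t)
      + t * (2 * V t * V₁ t - W t * U₁ t - U t * W₁ t)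
      - N ^ 2 * t + (N ^ 2 / 2 + (β ^ 2 - α ^ 2) / 8)) :
    DifferentiableOn ℝ σ (Set.Ioo 0 1) ∧ DifferentiableOn ℝ (deriv σ) (Set.Ioo 0 1) ∧
    ∀ t ∈ Set.Ioo (0 : ℝ) 1,
      deriv σ t * (t * (t - 1) * deriv (deriv σ) t) ^ 2 +
        (2 * deriv σ t * (t * deriv σ t - σ t) - (deriv σ t) ^ 2 -
          ((α + β) / 2) * ((β - α) / 2) * N * N) ^ 2 =
      (deriv σ t + ((α + β) / 2) ^ 2) * (deriv σ t + ((β - α) / 2) ^ 2) *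
        (deriv σ t + N ^ 2) * (deriv σ t + N ^ 2) := by
  set E : ℝ → ℝ := fun t => (U t * W₁ t - W t * U₁ t) * V₀ t
    - (V t * W₁ t - W t * V₁ t) * U₀ t - (U t * V₁ t - V t * U₁ t) * W₀ t with hE
  set x : ℝ → ℝ := fun t => 2 * V t * V₀ t - W t * U₀ t - U t * W₀ t with hx
  set y : ℝ → ℝ := fun t => 2 * V t * V₁ t - W t * U₁ t - U t * W₁ t with hy
  have hnear : ∀ t ∈ Set.Ioo (0 : ℝ) 1, ∀ᶠ s in nhds t, s ∈ Set.Ioo (0 : ℝ) 1 :=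
    fun t ht => isOpen_Ioo.mem_nhds ht
  have hdU : ∀ t ∈ Set.Ioo (0 : ℝ) 1, HasDerivAt U
      (-((2 * U t * V₀ t - 2 * V t * U₀ t) / t)
        - (2 * U t * V₁ t - 2 * V t * U₁ t) / (t - 1)) t := fun t ht =>
    ((hU₀ t ht).neg.sub (hU₁ t ht)).congr_of_eventuallyEq <| by
      filter_upwards [hnear t ht] with s hs
      simp only [Pi.sub_apply, Pi.neg_apply]
      linarith [sU s hs]
  have hdV : ∀ t ∈ Set.Ioo (0 : ℝ) 1, HasDerivAt V
      (-((U t * W₀ t - W t * U₀ t) / t) - (U t * W₁ t - W t * U₁ t) / (t - 1)) t := fun t ht =>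
    (((hV₀ t ht).neg.sub (hV₁ t ht)).sub_const N).congr_of_eventuallyEq <| by
      filter_upwards [hnear t ht] with s hs
      simp only [Pi.sub_apply, Pi.neg_apply]
      linarith [sV s hs]
  have hdW : ∀ t ∈ Set.Ioo (0 : ℝ) 1, HasDerivAt W
      (-((2 * V t * W₀ t - 2 * W t * V₀ t) / t)
        - (2 * V t * W₁ t - 2 * W t * V₁ t) / (t - 1)) t := fun t ht =>
    ((hW₀ t ht).neg.sub (hW₁ t ht)).congr_of_eventuallyEq <| by
      filter_upwards [hnear t ht] with s hs
      simp only [Pi.sub_apply, Pi.neg_apply]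
      linarith [sW s hs]
  have hdx : ∀ t ∈ Set.Ioo (0 : ℝ) 1, HasDerivAt x (-(2 * E t) / (t - 1)) t := fun t ht => by
    refine HasDerivAt.congr_deriv (((((hdV t ht).const_mul 2).mul (hV₀ t ht)).sub
      ((hdW t ht).mul (hU₀ t ht))).sub ((hdU t ht).mul (hW₀ t ht))) ?_
    simp only [hE]
    ring
  have hdy : ∀ t ∈ Set.Ioo (0 : ℝ) 1, HasDerivAt y (2 * E t / t) t := fun t ht => by
    refine HasDerivAt.congr_deriv (((((hdV t ht).const_mul 2).mul (hV₁ t ht)).sub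
      ((hdW t ht).mul (hU₁ t ht))).sub ((hdU t ht).mul (hW₁ t ht))) ?_
    simp only [hE]
    ring
  have hdσ : ∀ t ∈ Set.Ioo (0 : ℝ) 1, HasDerivAt σ (x t + y t - N ^ 2) t := fun t ht => by
    have h0 : t ≠ 0 := ht.1.ne'
    have h1 : t - 1 ≠ 0 := by linarith [ht.2]
    have h := (((((hasDerivAt_id t).sub_const 1).mul (hdx t ht)).add
      ((hasDerivAt_id t).mul (hdy t ht))).sub ((hasDerivAt_id t).const_mul (N ^ 2))).add_const
      (N ^ 2 / 2 + (β ^ 2 - α ^ 2) / 8)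
    refine (h.congr_of_eventuallyEq ?_).congr_deriv ?_
    · filter_upwards [hnear t ht] with s hs
      rw [hσ s hs]
      simp [hx, hy]
    · simp only [id_eq]
      field_simp
      ring
  have hder : ∀ t ∈ Set.Ioo (0 : ℝ) 1, deriv σ t = x t + y t - N ^ 2 :=
    fun t ht => (hdσ t ht).deriv
  have hddσ : ∀ t ∈ Set.Ioo (0 : ℝ) 1,
      HasDerivAt (deriv σ) (-(2 * E t) / (t - 1) + 2 * E t / t) t := fun t ht =>
    (((hdx t ht).add (hdy t ht)).sub_const (N ^ 2)).congr_of_eventuallyEq <| by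
      filter_upwards [hnear t ht] with s hs
      simp [hder s hs]
  refine ⟨fun t ht => (hdσ t ht).differentiableAt.differentiableWithinAt,
    fun t ht => (hddσ t ht).differentiableAt.differentiableWithinAt, fun t ht => ?_⟩
  have h0 : t ≠ 0 := ht.1.ne'
  have h1 : t - 1 ≠ 0 := by linarith [ht.2]
  have hdd : t * (t - 1) * deriv (deriv σ) t = -(2 * E t) := by
    rw [(hddσ t ht).deriv]
    field_simp
    ring
  -- trace form of the residues at `0` and `1`, expressed through the square of the sum
  have hz : 2 * V₀ t * V₁ t - W₀ t * U₁ t - U₀ t * W₁ t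
      = N ^ 2 - (α ^ 2 + β ^ 2) / 4 - x t - y t := by
    have e1 : U t = -U₀ t - U₁ t := by linarith [sU t ht]
    have e2 : W t = -W₀ t - W₁ t := by linarith [sW t ht]
    have e3 : N = -(V₀ t + V₁ t + V t) := by linarith [sV t ht]
    have h3 := d t ht
    rw [e1, e2] at h3
    simp only [hx, hy, e1, e2, e3]
    linear_combination -(d₀ t ht) - d₁ t ht - h3
  -- Gram determinant of the three residues in the trace form
  have hGram : (2 * E t) ^ 2 =
      -4 * x t * y t * (N ^ 2 - (α ^ 2 + β ^ 2) / 4 - x t - y t)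
        + x t ^ 2 * β ^ 2 + y t ^ 2 * α ^ 2 := by
    rw [← hz]
    have ha : α ^ 2 = 4 * (V₀ t ^ 2 - U₀ t * W₀ t) := by linarith [d₀ t ht]
    have hb : β ^ 2 = 4 * (V₁ t ^ 2 - U₁ t * W₁ t) := by linarith [d₁ t ht]
    rw [ha, hb]
    simp only [hE, hx, hy]
    linear_combination (4 * (2 * V₀ t * V₁ t - W₀ t * U₁ t - U₀ t * W₁ t) ^ 2
      - 16 * (V₀ t ^ 2 - U₀ t * W₀ t) * (V₁ t ^ 2 - U₁ t * W₁ t)) * d t ht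
  have hσt : σ t = t * (x t + y t - N ^ 2) - x t + (N ^ 2 / 2 + (β ^ 2 - α ^ 2) / 8) := by
    rw [hσ t ht]
    simp only [hx, hy]
    ring
  rw [hdd, hder t ht, hσt, neg_sq, hGram]
  ring

/-! ### Moment functionals and their orthogonal polynomials -/

/-- The linear functional `X ^ k ↦ m k` on polynomials. -/
noncomputable def functional (m : ℕ → ℝ) : ℝ[X] →ₗ[ℝ] ℝ :=
  lsum fun k => m k • (LinearMap.id : ℝ →ₗ[ℝ] ℝ)

theorem functional_eq_sum (m : ℕ → ℝ) {f : ℝ[X]} {N : ℕ} (hN : f.natDegree ≤ N) :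
    functional m f = ∑ k ∈ Finset.range (N + 1), f.coeff k * m k := by
  change f.sum (fun k c => (m k • (LinearMap.id : ℝ →ₗ[ℝ] ℝ)) c) = _
  rw [sum_over_range' f (fun k => map_zero _) (N + 1) (by omega)]
  refine Finset.sum_congr rfl fun k _ => ?_
  simp [mul_comm]

theorem functional_X_pow (m : ℕ → ℝ) (k : ℕ) : functional m (X ^ k) = m k := by
  rw [functional_eq_sum m (natDegree_X_pow k).le, Finset.sum_eq_single k] <;>
    simp +contextual [coeff_X_pow]

theorem functional_ext {φ ψ : ℝ[X] →ₗ[ℝ] ℝ} (h : ∀ k, φ (X ^ k) = ψ (X ^ k)) (f : ℝ[X]) :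
    φ f = ψ f :=
  eqOn_degreeLT (n := f.natDegree + 1) (fun k _ => h k) f
    (mem_degreeLT_iff_coeff.2 fun k hk => coeff_eq_zero_of_natDegree_lt (by omega))

/-- The polynomial of degree `< n` with coefficient vector `v`. -/
noncomputable def toPoly {n : ℕ} (v : Fin n → ℝ) : ℝ[X] := ∑ i, C (v i) * X ^ (i : ℕ)

theorem toPoly_coeff {n : ℕ} (v : Fin n → ℝ) (k : ℕ) :
    (toPoly v).coeff k = if h : k < n then v ⟨k, h⟩ else 0 := by
  simp only [toPoly, finsetSum_coeff, coeff_C_mul, coeff_X_pow]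
  split_ifs with h
  · rw [Finset.sum_eq_single ⟨k, h⟩]
    · simp
    · intro b _ hb
      rw [if_neg, mul_zero]
      intro hk
      exact hb (Fin.ext hk.symm)
    · simp
  · refine Finset.sum_eq_zero fun i _ => ?_
    rw [if_neg (by omega), mul_zero]

theorem toPoly_mem {n : ℕ} (v : Fin n → ℝ) : toPoly v ∈ degreeLT ℝ n := by
  rw [mem_degreeLT_iff_coeff]
  intro k hk
  rw [toPoly_coeff, dif_neg (by omega)]

theorem toPoly_eval {n : ℕ} (v : Fin n → ℝ) (z : ℝ) :
    (toPoly v).eval z = ∑ i, v i * z ^ (i : ℕ) := by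
  simp [toPoly, eval_finsetSum]

/-- The `n × n` Hankel matrix of a moment sequence. -/
def hankel (n : ℕ) (m : ℕ → ℝ) : Matrix (Fin n) (Fin n) ℝ :=
  Matrix.of fun i j => m ((i : ℕ) + (j : ℕ))

theorem hankel_transpose (n : ℕ) (m : ℕ → ℝ) : (hankel n m).transpose = hankel n m := by
  ext i j
  simp [hankel, add_comm]

theorem functional_toPoly_mul {n : ℕ} (m : ℕ → ℝ) (v : Fin n → ℝ) (j : Fin n) :
    functional m (toPoly v * X ^ (j : ℕ)) = (hankel n m).mulVec v j := by
  simp only [toPoly, Finset.sum_mul, map_sum, mul_assoc, ← pow_add, map_C_mul', functional_X_pow,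
    Matrix.mulVec, dotProduct, hankel, Matrix.of_apply]
  exact Finset.sum_congr rfl fun i _ => by rw [mul_comm, add_comm]

/-- The polynomial of degree `< n` whose pairing with `X ^ k` is `c k` for `k < n`. -/
noncomputable def riesz (n : ℕ) (m : ℕ → ℝ) (c : Fin n → ℝ) : ℝ[X] :=
  toPoly ((hankel n m)⁻¹.mulVec c)

theorem riesz_spec {n : ℕ} {m : ℕ → ℝ} (hdet : (hankel n m).det ≠ 0) (c : Fin n → ℝ)
    (φ : ℝ[X] →ₗ[ℝ] ℝ) (hφ : ∀ k : Fin n, c k = φ (X ^ (k : ℕ))) :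
    ∀ f ∈ degreeLT ℝ n, functional m (riesz n m c * f) = φ f := by
  refine eqOn_degreeLT (φ := functional m ∘ₗ LinearMap.mulLeft ℝ (riesz n m c)) fun k hk => ?_
  have h := functional_toPoly_mul m ((hankel n m)⁻¹.mulVec c) ⟨k, hk⟩
  rw [Matrix.mulVec_mulVec, Matrix.mul_nonsing_inv _ (isUnit_iff_ne_zero.2 hdet),
    Matrix.one_mulVec, hφ] at h
  exact h

/-- The monic orthogonal polynomial of degree `n`. -/
noncomputable def polyP (n : ℕ) (m : ℕ → ℝ) : ℝ[X] :=
  X ^ n - riesz n m fun i => m (n + i)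

/-- The orthogonal polynomial of degree `n - 1` with `ℓ (Q * X ^ (n - 1)) = 1`. -/
noncomputable def polyQ (n : ℕ) (m : ℕ → ℝ) : ℝ[X] :=
  riesz n m fun i => if (i : ℕ) = n - 1 then 1 else 0

/-- The Christoffel–Darboux kernel `K(z, ·)`. -/
noncomputable def polyK (n : ℕ) (m : ℕ → ℝ) (z : ℝ) : ℝ[X] :=
  riesz n m fun i => z ^ (i : ℕ)

theorem orthData {n : ℕ} {m : ℕ → ℝ} (hdet : (hankel n m).det ≠ 0) :
    OrthData n (functional m) (polyP n m) (polyQ n m) (polyK n m) where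
  P_monic := by
    rw [polyP, sub_sub_cancel_left]
    exact Submodule.neg_mem _ (toPoly_mem _)
  P_orth f hf := by
    rw [polyP, sub_mul, map_sub,
      riesz_spec hdet _ (functional m ∘ₗ LinearMap.mulLeft ℝ (X ^ n)) _ f hf]
    · simp
    · intro k
      simp [← pow_add, functional_X_pow]
  Q_mem := toPoly_mem _
  Q_orth f hf := by
    rw [polyQ, riesz_spec hdet _ (lcoeff ℝ (n - 1)) _ f hf, lcoeff_apply]
    intro k
    simp [coeff_X_pow, eq_comm]
  K_mem _ := toPoly_mem _
  K_rep z f hf := by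
    rw [polyK, riesz_spec hdet _ (leval z) _ f hf, leval_apply]
    intro k
    simp

/-! ### Differentiation with respect to the endpoint -/

/-- The family `f` of polynomials of bounded degree is differentiable at `t` coefficientwise, with
derivative `f'`. -/
def HasPolyDeriv (f : ℝ → ℝ[X]) (f' : ℝ[X]) (t : ℝ) : Prop :=
  (∃ N, ∀ τ, (f τ).natDegree ≤ N) ∧
    ∀ k, HasDerivAt (fun τ => (f τ).coeff k) (f'.coeff k) t

theorem HasPolyDeriv.mul {f g : ℝ → ℝ[X]} {f' g' : ℝ[X]} {t : ℝ} (hf : HasPolyDeriv f f' t)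
    (hg : HasPolyDeriv g g' t) :
    HasPolyDeriv (fun τ => f τ * g τ) (f' * g t + f t * g') t := by
  obtain ⟨⟨N, hN⟩, hf⟩ := hf
  obtain ⟨⟨N', hN'⟩, hg⟩ := hg
  refine ⟨⟨N + N', fun τ => natDegree_mul_le.trans (add_le_add (hN τ) (hN' τ))⟩, fun k => ?_⟩
  simp only [coeff_mul, coeff_add, ← Finset.sum_add_distrib]
  exact HasDerivAt.fun_sum fun p _ => (hf p.1).mul (hg p.2)

theorem HasPolyDeriv.const (p : ℝ[X]) (t : ℝ) : HasPolyDeriv (fun _ => p) 0 t :=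
  ⟨⟨_, fun _ => le_rfl⟩, fun k => by simpa using hasDerivAt_const t (p.coeff k)⟩

theorem HasPolyDeriv.functional {m : ℝ → ℕ → ℝ} {g t : ℝ}
    (hm : ∀ k, HasDerivAt (fun τ => m τ k) (-(g * t ^ k)) t)
    {f : ℝ → ℝ[X]} {f' : ℝ[X]} (hf : HasPolyDeriv f f' t) :
    HasDerivAt (fun τ => functional (m τ) (f τ))
      (functional (m t) f' - g * (f t).eval t) t := by
  obtain ⟨⟨N, hN⟩, hf⟩ := hf
  have hN' : f'.natDegree ≤ N := by
    rw [natDegree_le_iff_coeff_eq_zero]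
    intro k hk
    refine (hf k).unique ?_
    have : (fun τ => (f τ).coeff k) = fun _ => 0 :=
      funext fun τ => coeff_eq_zero_of_natDegree_lt ((hN τ).trans_lt hk)
    rw [this]
    exact hasDerivAt_const t 0
  have h : (fun τ => JacobiPVI.functional (m τ) (f τ))
      = fun τ => ∑ k ∈ Finset.range (N + 1), (f τ).coeff k * m τ k :=
    funext fun τ => functional_eq_sum _ (hN τ)
  rw [h, functional_eq_sum _ hN', eval_eq_sum_range' (n := N + 1) (by have := hN t; omega),
    Finset.mul_sum, ← Finset.sum_sub_distrib]
  refine (HasDerivAt.fun_sum fun k _ => (hf k).mul (hm k)).congr_deriv ?_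
  exact Finset.sum_congr rfl fun k _ => by ring

theorem differentiableAt_det {n : ℕ} {A : ℝ → Matrix (Fin n) (Fin n) ℝ} {t : ℝ}
    (hA : ∀ i j, DifferentiableAt ℝ (fun τ => A τ i j) t) :
    DifferentiableAt ℝ (fun τ => (A τ).det) t := by
  simp only [Matrix.det_apply]
  refine DifferentiableAt.fun_sum fun p _ => DifferentiableAt.const_smul ?_ _
  exact DifferentiableAt.fun_finsetProd fun i _ => hA _ _

theorem differentiableAt_inv {n : ℕ} {A : ℝ → Matrix (Fin n) (Fin n) ℝ} {t : ℝ}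
    (hA : ∀ i j, DifferentiableAt ℝ (fun τ => A τ i j) t) (hdet : (A t).det ≠ 0) (i j : Fin n) :
    DifferentiableAt ℝ (fun τ => (A τ)⁻¹ i j) t := by
  simp only [Matrix.inv_def, Ring.inverse_eq_inv', Matrix.smul_apply, smul_eq_mul,
    Matrix.adjugate_apply]
  refine ((differentiableAt_det hA).fun_inv hdet).mul (differentiableAt_det fun k l => ?_)
  simp only [Matrix.updateRow_apply]
  split_ifs
  · exact differentiableAt_const _
  · exact hA k l

theorem natDegree_le_of_mem {n : ℕ} {f : ℝ[X]} (hf : f ∈ degreeLT ℝ n) : f.natDegree ≤ n := by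
  rw [natDegree_le_iff_coeff_eq_zero]
  exact fun k hk => mem_degreeLT_iff_coeff.1 hf k hk.le

theorem exists_hasPolyDeriv_riesz {n : ℕ} {m : ℝ → ℕ → ℝ} {t : ℝ}
    (hm : ∀ k, DifferentiableAt ℝ (fun τ => m τ k) t) (hdet : (hankel n (m t)).det ≠ 0)
    {c : ℝ → Fin n → ℝ} (hc : ∀ i, DifferentiableAt ℝ (fun τ => c τ i) t) :
    ∃ f' ∈ degreeLT ℝ n, HasPolyDeriv (fun τ => riesz n (m τ) (c τ)) f' t := by
  refine ⟨toPoly fun i => deriv (fun τ => (hankel n (m τ))⁻¹.mulVec (c τ) i) t, toPoly_mem _,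
    ⟨n, fun τ => natDegree_le_of_mem (toPoly_mem _)⟩, fun k => ?_⟩
  simp only [riesz, toPoly_coeff]
  split_ifs with h
  · refine DifferentiableAt.hasDerivAt ?_
    simp only [Matrix.mulVec, dotProduct]
    refine DifferentiableAt.fun_sum fun j _ => DifferentiableAt.mul ?_ (hc j)
    exact differentiableAt_inv (fun i j => hm _) hdet _ _
  · exact hasDerivAt_const t 0

/-- If the pairings of the family `R` with `1, X, …, X ^ (n - 1)` do not depend on `t`, then
`∂ₜ R = w(t) R(t) K(t, ·)`. -/
theorem polyDeriv_eq {n : ℕ} {m : ℝ → ℕ → ℝ} {w t : ℝ}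
    (hm : ∀ k, HasDerivAt (fun τ => m τ k) (-(w * t ^ k)) t)
    (hdet : (hankel n (m t)).det ≠ 0) {R : ℝ → ℝ[X]} {R' : ℝ[X]} (hR : HasPolyDeriv R R' t)
    (hR' : R' ∈ degreeLT ℝ n) (c : ℕ → ℝ)
    (hc : ∀ k < n, ∀ᶠ τ in nhds t, functional (m τ) (R τ * X ^ k) = c k) :
    R' = C (w * (R t).eval t) * polyK n (m t) t := by
  have H := orthData hdet
  refine sub_eq_zero.1 (H.eq_zero (Submodule.sub_mem _ hR' ?_) fun k hk => ?_)
  · rw [← smul_eq_C_mul]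
    exact Submodule.smul_mem _ _ (H.K_mem t)
  · have h1 := (hR.mul (HasPolyDeriv.const (X ^ k) t)).functional hm
    have h2 := h1.unique ((hasDerivAt_const t (c k)).congr_of_eventuallyEq (hc k hk))
    rw [sub_mul, map_sub, mul_assoc, map_C_mul', H.K_rep t _ (X_pow_mem_degreeLT hk)]
    simp only [mul_zero, add_zero, eval_mul, eval_pow, eval_X] at h2 ⊢
    linarith

/-- Logarithmic derivative of the Hankel determinant. -/
theorem hasDerivAt_det_hankel {n : ℕ} {m : ℝ → ℕ → ℝ} {w t : ℝ}
    (hm : ∀ k, HasDerivAt (fun τ => m τ k) (-(w * t ^ k)) t)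
    (hdet : (hankel n (m t)).det ≠ 0) :
    HasDerivAt (fun τ => (hankel n (m τ)).det)
      (-((hankel n (m t)).det * (w * (polyK n (m t) t).eval t))) t := by
  let D : ContinuousMultilinearMap ℝ (fun _ : Fin n => Fin n → ℝ) ℝ :=
    { (Matrix.detRowAlternating (n := Fin n) (R := ℝ)).toMultilinearMap with
      cont := Continuous.matrix_det continuous_id }
  have hA : HasDerivAt (fun τ => (fun i j => m τ ((i : ℕ) + (j : ℕ)) : Fin n → Fin n → ℝ))
      (fun i j => -(w * t ^ ((i : ℕ) + (j : ℕ)))) t :=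
    hasDerivAt_pi.2 fun i => hasDerivAt_pi.2 fun j => hm _
  have h := (D.hasFDerivAt (fun i j => m t ((i : ℕ) + (j : ℕ)))).comp_hasDerivAt t hA
  refine h.congr_deriv ?_
  rw [ContinuousMultilinearMap.linearDeriv_apply]
  have hrow : ∀ i : Fin n, D (Function.update (fun i j => m t ((i : ℕ) + (j : ℕ))) i
      (fun j => -(w * t ^ ((i : ℕ) + (j : ℕ)))))
      = -(w * t ^ (i : ℕ)) * ((hankel n (m t)).det
        * ((hankel n (m t))⁻¹.mulVec (fun j => t ^ (j : ℕ))) i) := by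
    intro i
    have e : (fun j : Fin n => -(w * t ^ ((i : ℕ) + (j : ℕ))))
        = (-(w * t ^ (i : ℕ))) • (fun j : Fin n => t ^ (j : ℕ)) := by
      ext j
      simp [pow_add]
      ring
    have h1 : D (Function.update (fun i j => m t ((i : ℕ) + (j : ℕ))) i (fun j => t ^ (j : ℕ)))
        = ((hankel n (m t)).updateRow i (fun j => t ^ (j : ℕ))).det := rfl
    rw [e, ContinuousMultilinearMap.map_update_smul, h1, ← Matrix.cramer_transpose_apply,
      hankel_transpose, ← Matrix.det_smul_inv_mulVec_eq_cramer _ _ (isUnit_iff_ne_zero.2 hdet)]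
    simp
  rw [Finset.sum_congr rfl fun i _ => hrow i, polyK, riesz, toPoly_eval, Finset.mul_sum,
    Finset.mul_sum, ← Finset.sum_neg_distrib]
  exact Finset.sum_congr rfl fun i _ => by ring

/-! ### Moments of the truncated Jacobi weight -/

/-- The Jacobi weight. -/
noncomputable def weight (α β x : ℝ) : ℝ := x ^ α * (1 - x) ^ β

/-- The moments over `[t, 1]` of a function `g`. -/
noncomputable def moment (g : ℝ → ℝ) (t : ℝ) (k : ℕ) : ℝ := ∫ x in t..1, x ^ k * g x

theorem weight_continuousOn {α β : ℝ} (hα : 0 < α) (hβ : 0 < β) (s : Set ℝ) :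
    ContinuousOn (weight α β) s := by
  refine Continuous.continuousOn ?_
  exact (Real.continuous_rpow_const hα.le).mul
    ((Real.continuous_rpow_const hβ.le).comp (continuous_const.sub continuous_id))

theorem weight_measurable (α β : ℝ) : Measurable (weight α β) := by
  unfold weight
  fun_prop

theorem weight_one {α β : ℝ} (hβ : 0 < β) : weight α β 1 = 0 := by
  simp [weight, Real.zero_rpow hβ.ne']

theorem weight_intervalIntegrable {α β t : ℝ} (hα : 0 < α) (hβ : 0 < β) :
    IntervalIntegrable (weight α β) volume t 1 :=
  (weight_continuousOn hα hβ _).intervalIntegrable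

theorem weight_div_X_intervalIntegrable {α β t : ℝ} (hα : 0 < α) (hβ : 0 < β)
    (ht : t ∈ Set.Ioo (0 : ℝ) 1) :
    IntervalIntegrable (fun x => weight α β x / (x - 0)) volume t 1 := by
  refine ContinuousOn.intervalIntegrable ((weight_continuousOn hα hβ _).div
    (by fun_prop) fun x hx => ?_)
  rw [Set.uIcc_of_le ht.2.le] at hx
  have := ht.1.trans_le hx.1
  linarith

theorem weight_div_X_sub_one_intervalIntegrable {α β t : ℝ} (hα : 0 < α) (hβ : 0 < β)
    (ht : t ∈ Set.Ioo (0 : ℝ) 1) :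
    IntervalIntegrable (fun x => weight α β x / (x - 1)) volume t 1 := by
  have h1 : IntervalIntegrable (fun x : ℝ => (1 - x) ^ (β - 1)) volume t 1 := by
    have := (intervalIntegrable_rpow' (a := 1 - t) (b := 0) (r := β - 1)
      (by linarith)).comp_sub_left 1
    simpa using this
  have h2 : IntervalIntegrable (fun x : ℝ => -x ^ α * (1 - x) ^ (β - 1)) volume t 1 :=
    h1.continuousOn_mul (Real.continuous_rpow_const hα.le).neg.continuousOn
  rw [intervalIntegrable_iff_integrableOn_Ioo_of_le ht.2.le] at h2 ⊢
  refine h2.congr_fun (fun x hx => ?_) measurableSet_Ioo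
  have hx1 : 1 - x ≠ 0 := by linarith [hx.2]
  have hx2 : x - 1 ≠ 0 := by linarith [hx.2]
  simp only [weight]
  rw [Real.rpow_sub_one hx1]
  field_simp
  ring

theorem pow_mul_intervalIntegrable {g : ℝ → ℝ} {t : ℝ} (hg : IntervalIntegrable g volume t 1)
    (k : ℕ) : IntervalIntegrable (fun x => x ^ k * g x) volume t 1 :=
  hg.continuousOn_mul (by fun_prop)

theorem hasDerivAt_moment {g : ℝ → ℝ} {t : ℝ} (hg : IntervalIntegrable g volume t 1)
    (hgm : Measurable g) (hgc : ContinuousAt g t) (k : ℕ) :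
    HasDerivAt (fun τ => moment g τ k) (-(g t * t ^ k)) t := by
  have h := integral_hasDerivAt_left (f := fun x => x ^ k * g x)
    (pow_mul_intervalIntegrable hg k)
    (((measurable_id.pow_const k).mul hgm).stronglyMeasurable.stronglyMeasurableAtFilter)
    ((continuousAt_id.pow k).mul hgc)
  exact h.congr_deriv (by ring)

theorem functional_moment {g : ℝ → ℝ} {t : ℝ} (hg : IntervalIntegrable g volume t 1)
    (f : ℝ[X]) : functional (moment g t) f = ∫ x in t..1, f.eval x * g x := by
  rw [functional_eq_sum _ le_rfl]
  simp only [moment, ← intervalIntegral.integral_const_mul]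
  rw [← intervalIntegral.integral_finsetSum
    (fun k _ => (pow_mul_intervalIntegrable hg k).const_mul _)]
  refine intervalIntegral.integral_congr fun x _ => ?_
  simp only [eval_eq_sum_range, Finset.sum_mul, mul_assoc]

/-- Division of the weight by `x - s` is inverse to multiplication of the polynomial by `X - s`.
The hypothesis `hs` covers the possible zero of the denominator. -/
theorem functional_div {g : ℝ → ℝ} {s t : ℝ}
    (hg : IntervalIntegrable (fun x => g x / (x - s)) volume t 1)
    (hs : ∀ x ∈ Set.uIcc t 1, x = s → g x = 0) (f : ℝ[X]) :
    functional (moment (fun x => g x / (x - s)) t) ((X - C s) * f)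
      = functional (moment g t) f := by
  refine functional_ext (φ := functional (moment (fun x => g x / (x - s)) t) ∘ₗ
    LinearMap.mulLeft ℝ (X - C s)) (fun k => ?_) f
  have e : (X - C s : ℝ[X]) * X ^ k = X ^ (k + 1) - C s * X ^ k := by ring
  simp only [LinearMap.comp_apply, LinearMap.mulLeft_apply]
  rw [e, map_sub, map_C_mul']
  simp only [functional_X_pow, moment]
  rw [← intervalIntegral.integral_const_mul,
    ← intervalIntegral.integral_sub (pow_mul_intervalIntegrable hg _)
      ((pow_mul_intervalIntegrable hg _).const_mul _)]
  refine intervalIntegral.integral_congr fun x hx => ?_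
  by_cases h : x = s
  · simp [hs x hx h]
  · have : x - s ≠ 0 := sub_ne_zero.2 h
    field_simp
    ring

theorem hasDerivAt_weight {α β x : ℝ} (hx : x ∈ Set.Ioo (0 : ℝ) 1) :
    HasDerivAt (weight α β) (α * (weight α β x / (x - 0)) + β * (weight α β x / (x - 1))) x := by
  have h0 : x ≠ 0 := hx.1.ne'
  have h1 : 1 - x ≠ 0 := by linarith [hx.2]
  have h2 : x - 1 ≠ 0 := by linarith [hx.2]
  have h := (Real.hasDerivAt_rpow_const (p := α) (Or.inl h0)).mul
    (((hasDerivAt_id x).const_sub 1).rpow_const (p := β) (Or.inl h1))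
  refine h.congr_deriv ?_
  simp only [weight, id_eq]
  rw [Real.rpow_sub_one h0, Real.rpow_sub_one h1]
  field_simp
  ring

/-- Integration by parts; the boundary term at `1` vanishes because `β > 0`. -/
theorem functional_parts {α β t : ℝ} (hα : 0 < α) (hβ : 0 < β) (ht : t ∈ Set.Ioo (0 : ℝ) 1)
    (f : ℝ[X]) :
    functional (moment (weight α β) t) (derivative f)
      + α * functional (moment (fun x => weight α β x / (x - 0)) t) f
      + β * functional (moment (fun x => weight α β x / (x - 1)) t) f
      = -(weight α β t * f.eval t) := by
  have i := weight_intervalIntegrable (t := t) hα hβ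
  have i0 := weight_div_X_intervalIntegrable hα hβ ht
  have i1 := weight_div_X_sub_one_intervalIntegrable hα hβ ht
  have c : ∀ p : ℝ[X], ContinuousOn (fun x => p.eval x) (Set.uIcc t 1) :=
    fun p => p.continuous.continuousOn
  rw [functional_moment i, functional_moment i0, functional_moment i1,
    ← intervalIntegral.integral_const_mul, ← intervalIntegral.integral_const_mul,
    ← intervalIntegral.integral_add (i.continuousOn_mul (c _))
      ((i0.continuousOn_mul (c _)).const_mul _),
    ← intervalIntegral.integral_add ((i.continuousOn_mul (c _)).add
      ((i0.continuousOn_mul (c _)).const_mul _)) ((i1.continuousOn_mul (c _)).const_mul _)]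
  rw [integral_eq_sub_of_hasDerivAt_of_le (f := fun x => f.eval x * weight α β x) ht.2.le]
  · simp only [weight_one hβ]
    ring
  · exact f.continuous.continuousOn.mul (weight_continuousOn hα hβ _)
  · intro x hx
    refine ((f.hasDerivAt x).mul (hasDerivAt_weight ⟨ht.1.trans hx.1, hx.2⟩)).congr_deriv ?_
    ring
  · exact ((i.continuousOn_mul (c _)).add ((i0.continuousOn_mul (c _)).const_mul _)).add
      ((i1.continuousOn_mul (c _)).const_mul _)

theorem det_hankel_pos {α β t : ℝ} (hα : 0 < α) (hβ : 0 < β) (ht : t ∈ Set.Ioo (0 : ℝ) 1)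
    (n : ℕ) : 0 < (hankel n (moment (weight α β) t)).det := by
  refine (Matrix.PosDef.of_dotProduct_mulVec_pos ?_ fun v hv => ?_).det_pos
  · rw [Matrix.IsHermitian, Matrix.conjTranspose_eq_transpose_of_trivial, hankel_transpose]
  · have e : star v ⬝ᵥ (hankel n (moment (weight α β) t)).mulVec v
        = functional (moment (weight α β) t) (toPoly v * toPoly v) := by
      have : toPoly v * toPoly v = ∑ i, C (v i) * (toPoly v * X ^ (i : ℕ)) := by
        calc toPoly v * toPoly v = (∑ i, C (v i) * X ^ (i : ℕ)) * toPoly v := rfl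
          _ = _ := by
            rw [Finset.sum_mul]
            exact Finset.sum_congr rfl fun i _ => by ring
      rw [this, map_sum]
      simp only [map_C_mul', functional_toPoly_mul, dotProduct, star_trivial]
    rw [e, functional_moment (weight_intervalIntegrable hα hβ)]
    refine intervalIntegral.integral_pos ht.2
      ((toPoly v * toPoly v).continuous.continuousOn.mul (weight_continuousOn hα hβ _)) ?_ ?_
    · intro x hx
      have : 0 ≤ x := (ht.1.trans hx.1).le
      have : 0 ≤ 1 - x := by linarith [hx.2]
      rw [eval_mul, weight]
      have := mul_self_nonneg (eval x (toPoly v))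
      positivity
    · by_contra! hc
      have hz : toPoly v = 0 := by
        refine eq_zero_of_infinite_isRoot _ ((Set.Ioo_infinite ht.2).mono fun x hx => ?_)
        have h1 := hc x ⟨hx.1.le, hx.2.le⟩
        have h2 : 0 < weight α β x := by
          have : 0 < x := ht.1.trans hx.1
          have : 0 < 1 - x := by linarith [hx.2]
          rw [weight]
          positivity
        rw [eval_mul] at h1
        have h3 : eval x (toPoly v) * eval x (toPoly v) ≤ 0 := by
          by_contra! h
          exact absurd h1 (not_le.2 (mul_pos h h2))
        exact mul_self_eq_zero.1 (le_antisymm h3 (mul_self_nonneg _))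
      refine hv (funext fun i => ?_)
      have := toPoly_coeff v i
      rw [hz, coeff_zero, dif_pos i.2] at this
      exact this.symm

theorem jacobiHankel_eq {α β t : ℝ} (ht : t ∈ Set.Ioo (0 : ℝ) 1) (n : ℕ) :
    jacobiHankel n t α β = (hankel n (moment (weight α β) t)).det := by
  unfold jacobiHankel hankel moment
  congr 2
  ext i j
  refine intervalIntegral.integral_congr fun x hx => ?_
  rw [Set.uIcc_of_le ht.2.le] at hx
  have hx0 : 0 < x := ht.1.trans_le hx.1
  simp only [weight]
  rw [Real.rpow_add hx0, ← Nat.cast_add, Real.rpow_natCast]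
  ring

/-! ### The Schlesinger system of the truncated Jacobi weight -/

section Schlesinger

variable {n : ℕ} {m : ℝ → ℕ → ℝ} {w t : ℝ}

theorem hasPolyDeriv_polyP (hm : ∀ k, HasDerivAt (fun τ => m τ k) (-(w * t ^ k)) t)
    (hdet : ∀ᶠ τ in nhds t, (hankel n (m τ)).det ≠ 0) :
    HasPolyDeriv (fun τ => polyP n (m τ))
      (C (w * (polyP n (m t)).eval t) * polyK n (m t) t) t := by
  obtain ⟨R', hR', hd⟩ := exists_hasPolyDeriv_riesz (n := n) (c := fun τ i => m τ (n + i))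
    (fun k => (hm k).differentiableAt) hdet.self_of_nhds (fun i => (hm _).differentiableAt)
  have h : HasPolyDeriv (fun τ => polyP n (m τ)) (-R') t := by
    refine ⟨⟨n, fun τ => ?_⟩, fun k => ?_⟩
    · refine (natDegree_sub_le _ _).trans (max_le (natDegree_X_pow_le n) ?_)
      exact natDegree_le_of_mem (toPoly_mem _)
    · simp only [polyP, coeff_sub, coeff_neg]
      exact (hd.2 k).const_sub _
  rw [← polyDeriv_eq hm hdet.self_of_nhds h (Submodule.neg_mem _ hR') (fun _ => 0) ?_]
  · exact h
  · intro k hk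
    filter_upwards [hdet] with τ hτ
    exact (orthData hτ).P_orth _ (X_pow_mem_degreeLT hk)

theorem hasPolyDeriv_polyQ (hm : ∀ k, HasDerivAt (fun τ => m τ k) (-(w * t ^ k)) t)
    (hdet : ∀ᶠ τ in nhds t, (hankel n (m τ)).det ≠ 0) :
    HasPolyDeriv (fun τ => polyQ n (m τ))
      (C (w * (polyQ n (m t)).eval t) * polyK n (m t) t) t := by
  obtain ⟨R', hR', h⟩ := exists_hasPolyDeriv_riesz (n := n)
    (c := fun _ i => if (i : ℕ) = n - 1 then 1 else 0)
    (fun k => (hm k).differentiableAt) hdet.self_of_nhds (fun i => differentiableAt_const _)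
  rw [← polyDeriv_eq (R := fun τ => polyQ n (m τ)) hm hdet.self_of_nhds h hR'
    (fun k => (X ^ k : ℝ[X]).coeff (n - 1)) ?_]
  · exact h
  · intro k hk
    filter_upwards [hdet] with τ hτ
    exact (orthData hτ).Q_orth _ (X_pow_mem_degreeLT hk)

/-- The Schlesinger equations for the residue matrix at `s`, where `ms` are the moments of the
weight divided by `x - s`. The constant `1 / 2` makes that matrix traceless. -/
theorem schlesinger (hn : 1 ≤ n) (hm : ∀ k, HasDerivAt (fun τ => m τ k) (-(w * t ^ k)) t)
    (hdet : ∀ᶠ τ in nhds t, (hankel n (m τ)).det ≠ 0)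
    {ms : ℝ → ℕ → ℝ} {s : ℝ} (hts : t - s ≠ 0)
    (hms : ∀ k, HasDerivAt (fun τ => ms τ k) (-(w / (t - s) * t ^ k)) t)
    (hs : ∀ f, functional (ms t) ((X - C s) * f) = functional (m t) f)
    {P Q : ℝ → ℝ[X]} (hP : P = fun τ => polyP n (m τ)) (hQ : Q = fun τ => polyQ n (m τ))
    {U V W : ℝ} (hU : U = w * ((P t).eval t * (P t).eval t))
    (hV : V = w * ((P t).eval t * (Q t).eval t)) (hW : W = w * ((Q t).eval t * (Q t).eval t)) :
    HasDerivAt (fun τ => functional (ms τ) (P τ * P τ))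
      ((2 * U * (functional (ms t) (P t * Q t) - 1 / 2)
        - 2 * V * functional (ms t) (P t * P t)) / (t - s)) t ∧
    HasDerivAt (fun τ => functional (ms τ) (P τ * Q τ))
      ((U * functional (ms t) (Q t * Q t) - W * functional (ms t) (P t * P t)) / (t - s)) t ∧
    HasDerivAt (fun τ => functional (ms τ) (Q τ * Q τ))
      ((2 * V * functional (ms t) (Q t * Q t)
        - 2 * W * (functional (ms t) (P t * Q t) - 1 / 2)) / (t - s)) t := by
  have H := orthData hdet.self_of_nhds
  have dP := hasPolyDeriv_polyP hm hdet
  have dQ := hasPolyDeriv_polyQ hm hdet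
  have kP := H.pairing_P hn hs t
  have kQ := H.pairing_Q hn hs t
  subst hP hQ
  simp only at *
  set p := polyP n (m t)
  set q := polyQ n (m t)
  set K := polyK n (m t) t
  have kP' : functional (ms t) (p * K) = (p.eval t * functional (ms t) (p * q)
      - q.eval t * functional (ms t) (p * p)) / (t - s) := by
    rw [eq_div_iff hts, ← kP]; ring
  have kQ' : functional (ms t) (q * K) = (q.eval t + p.eval t * functional (ms t) (q * q)
      - q.eval t * functional (ms t) (p * q)) / (t - s) := by
    rw [eq_div_iff hts, ← kQ]; ring
  refine ⟨?_, ?_, ?_⟩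
  · refine ((dP.mul dP).functional hms).congr_deriv ?_
    have e : C (w * p.eval t) * K * p + p * (C (w * p.eval t) * K)
        = C (2 * (w * p.eval t)) * (p * K) := by rw [C_mul (a := 2)]; simp only [C_ofNat]; ring
    rw [e, map_C_mul', kP', eval_mul, hU, hV]
    field_simp
    ring
  · refine ((dP.mul dQ).functional hms).congr_deriv ?_
    have e : C (w * p.eval t) * K * q + p * (C (w * q.eval t) * K)
        = C (w * p.eval t) * (q * K) + C (w * q.eval t) * (p * K) := by ring
    rw [e, map_add, map_C_mul', map_C_mul', kP', kQ', eval_mul, hU, hW]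
    field_simp
    ring
  · refine ((dQ.mul dQ).functional hms).congr_deriv ?_
    have e : C (w * q.eval t) * K * q + q * (C (w * q.eval t) * K)
        = C (2 * (w * q.eval t)) * (q * K) := by rw [C_mul (a := 2)]; simp only [C_ofNat]; ring
    rw [e, map_C_mul', kQ', eval_mul, hV, hW]
    field_simp
    ring

end Schlesinger

end JacobiPVI

theorem jacobi_sigma_PVI (α β : ℝ) (hα : 0 < α) (hβ : 0 < β) (n : ℕ) (hn : 1 ≤ n)
    (σ : ℝ → ℝ)
    (hσ : ∀ t : ℝ, σ t =
      t * (t - 1) * deriv (fun s => Real.log (jacobiHankel n s α β)) t +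
        (-(2 * (n : ℝ) + α + β) ^ 2 / 4) * t +
        (2 * (n : ℝ) * ((n : ℝ) + α + β) + β * (α + β)) / 4) :
    DifferentiableOn ℝ σ (Set.Ioo 0 1) ∧ DifferentiableOn ℝ (deriv σ) (Set.Ioo 0 1) ∧
    ∀ t ∈ Set.Ioo (0 : ℝ) 1,
      deriv σ t * (t * (t - 1) * deriv (deriv σ) t) ^ 2 +
        (2 * deriv σ t * (t * deriv σ t - σ t) - (deriv σ t) ^ 2 -
          ((α + β) / 2) * ((β - α) / 2) * ((2 * (n : ℝ) + α + β) / 2) *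
            ((2 * (n : ℝ) + α + β) / 2)) ^ 2 =
      (deriv σ t + ((α + β) / 2) ^ 2) * (deriv σ t + ((β - α) / 2) ^ 2) *
        (deriv σ t + ((2 * (n : ℝ) + α + β) / 2) ^ 2) *
        (deriv σ t + ((2 * (n : ℝ) + α + β) / 2) ^ 2) := by
  open JacobiPVI Polynomial in
  set m : ℝ → ℕ → ℝ := moment (weight α β) with hm_def
  set m₀ : ℝ → ℕ → ℝ := moment (fun x => weight α β x / (x - 0)) with hm₀_def
  set m₁ : ℝ → ℕ → ℝ := moment (fun x => weight α β x / (x - 1)) with hm₁_def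
  set P : ℝ → ℝ[X] := fun τ => polyP n (m τ) with hP
  set Q : ℝ → ℝ[X] := fun τ => polyQ n (m τ) with hQ
  set U : ℝ → ℝ := fun t => weight α β t * ((P t).eval t * (P t).eval t) with hU
  set V : ℝ → ℝ := fun t => weight α β t * ((P t).eval t * (Q t).eval t) with hV
  set W : ℝ → ℝ := fun t => weight α β t * ((Q t).eval t * (Q t).eval t) with hW
  have wc : ∀ t, ContinuousAt (weight α β) t := fun t =>
    (weight_continuousOn hα hβ Set.univ).continuousAt Filter.univ_mem
  have hnear : ∀ t ∈ Set.Ioo (0 : ℝ) 1, ∀ᶠ s in nhds t, s ∈ Set.Ioo (0 : ℝ) 1 :=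
    fun t ht => isOpen_Ioo.mem_nhds ht
  have hdet0 : ∀ t ∈ Set.Ioo (0 : ℝ) 1, (hankel n (m t)).det ≠ 0 :=
    fun t ht => (det_hankel_pos hα hβ ht n).ne'
  have hdet : ∀ t ∈ Set.Ioo (0 : ℝ) 1, ∀ᶠ τ in nhds t, (hankel n (m τ)).det ≠ 0 := fun t ht => by
    filter_upwards [hnear t ht] with s hs using hdet0 s hs
  have h0 : ∀ t ∈ Set.Ioo (0 : ℝ) 1, t - 0 ≠ 0 := fun t ht => by
    rw [sub_zero]; exact ht.1.ne'
  have h1 : ∀ t ∈ Set.Ioo (0 : ℝ) 1, t - 1 ≠ 0 := fun t ht => by linarith [ht.2]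
  have hm : ∀ t ∈ Set.Ioo (0 : ℝ) 1, ∀ k,
      HasDerivAt (fun τ => m τ k) (-(weight α β t * t ^ k)) t := fun t ht =>
    hasDerivAt_moment (weight_intervalIntegrable hα hβ) (weight_measurable α β) (wc t)
  have hm₀ : ∀ t ∈ Set.Ioo (0 : ℝ) 1, ∀ k,
      HasDerivAt (fun τ => m₀ τ k) (-(weight α β t / (t - 0) * t ^ k)) t := fun t ht =>
    hasDerivAt_moment (weight_div_X_intervalIntegrable hα hβ ht)
      ((weight_measurable α β).div (measurable_id.sub_const 0))
      ((wc t).div (continuousAt_id.sub continuousAt_const) (h0 t ht))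
  have hm₁ : ∀ t ∈ Set.Ioo (0 : ℝ) 1, ∀ k,
      HasDerivAt (fun τ => m₁ τ k) (-(weight α β t / (t - 1) * t ^ k)) t := fun t ht =>
    hasDerivAt_moment (weight_div_X_sub_one_intervalIntegrable hα hβ ht)
      ((weight_measurable α β).div (measurable_id.sub_const 1))
      ((wc t).div (continuousAt_id.sub continuousAt_const) (h1 t ht))
  have hs₀ : ∀ t ∈ Set.Ioo (0 : ℝ) 1, ∀ f,
      functional (m₀ t) ((X - C 0) * f) = functional (m t) f := fun t ht =>
    functional_div (weight_div_X_intervalIntegrable hα hβ ht) fun x hx hx0 => by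
      rw [Set.uIcc_of_le ht.2.le] at hx
      linarith [ht.1, hx.1]
  have hs₁ : ∀ t ∈ Set.Ioo (0 : ℝ) 1, ∀ f,
      functional (m₁ t) ((X - C 1) * f) = functional (m t) f := fun t ht =>
    functional_div (weight_div_X_sub_one_intervalIntegrable hα hβ ht) fun x _ hx1 => by
      rw [hx1, weight_one hβ]
  have H : ∀ t ∈ Set.Ioo (0 : ℝ) 1,
      OrthData n (functional (m t)) (P t) (Q t) (polyK n (m t)) :=
    fun t ht => orthData (hdet0 t ht)
  have S₀ := fun t ht => schlesinger hn (hm t ht) (hdet t ht) (h0 t ht) (hm₀ t ht) (hs₀ t ht)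
    hP hQ (U := U t) (V := V t) (W := W t) rfl rfl rfl
  have S₁ := fun t ht => schlesinger hn (hm t ht) (hdet t ht) (h1 t ht) (hm₁ t ht) (hs₁ t ht)
    hP hQ (U := U t) (V := V t) (W := W t) rfl rfl rfl
  have parts := fun t ht => functional_parts (t := t) hα hβ ht
  -- entries of the residue matrices at `0` and `1`, made traceless by the shift `1 / 2`
  refine sigma_form_of_schlesinger (α := α) (β := β) (N := (2 * (n : ℝ) + α + β) / 2)
    (U₀ := fun t => α * functional (m₀ t) (P t * P t))
    (V₀ := fun t => α * (functional (m₀ t) (P t * Q t) - 1 / 2))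
    (W₀ := fun t => α * functional (m₀ t) (Q t * Q t))
    (U₁ := fun t => β * functional (m₁ t) (P t * P t))
    (V₁ := fun t => β * (functional (m₁ t) (P t * Q t) - 1 / 2))
    (W₁ := fun t => β * functional (m₁ t) (Q t * Q t))
    (U := U) (V := V) (W := W) ?_ ?_ ?_ ?_ ?_ ?_ ?_ ?_ ?_ ?_ ?_ ?_ ?_
  · intro t ht
    refine ((S₀ t ht).1.const_mul α).congr_deriv ?_
    rw [sub_zero]; ring
  · intro t ht
    refine (((S₀ t ht).2.1.sub_const (1 / 2)).const_mul α).congr_deriv ?_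
    rw [sub_zero]; ring
  · intro t ht
    refine ((S₀ t ht).2.2.const_mul α).congr_deriv ?_
    rw [sub_zero]; ring
  · intro t ht
    exact ((S₁ t ht).1.const_mul β).congr_deriv (by ring)
  · intro t ht
    exact (((S₁ t ht).2.1.sub_const (1 / 2)).const_mul β).congr_deriv (by ring)
  · intro t ht
    exact ((S₁ t ht).2.2.const_mul β).congr_deriv (by ring)
  · exact fun t ht => (H t ht).sum_PP (parts t ht)
  · intro t ht
    have := (H t ht).sum_PQ hn (parts t ht)
    simp only [hV]
    linear_combination this
  · exact fun t ht => (H t ht).sum_QQ (parts t ht)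
  · intro t ht
    have := (H t ht).residue_det hn (hs₀ t ht)
    linear_combination -α ^ 2 * this
  · intro t ht
    have := (H t ht).residue_det hn (hs₁ t ht)
    linear_combination -β ^ 2 * this
  · intro t _
    simp only [hU, hV, hW]
    ring
  · intro t ht
    have hlog : deriv (fun s => Real.log (jacobiHankel n s α β)) t
        = -(weight α β t * (polyK n (m t) t).eval t) := by
      have h := (hasDerivAt_det_hankel (hm t ht) (hdet0 t ht)).log (hdet0 t ht)
      have h' : HasDerivAt (fun s => Real.log (jacobiHankel n s α β)) _ t :=
        h.congr_of_eventuallyEq <| by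
          filter_upwards [hnear t ht] with s hs
          rw [jacobiHankel_eq hs]
      rw [h'.deriv, neg_div, mul_div_cancel_left₀ _ (hdet0 t ht)]
    have kP₀ := (H t ht).pairing_P hn (hs₀ t ht) t
    have kQ₀ := (H t ht).pairing_Q hn (hs₀ t ht) t
    have kP₁ := (H t ht).pairing_P hn (hs₁ t ht) t
    have kQ₁ := (H t ht).pairing_Q hn (hs₁ t ht) t
    rw [sub_zero] at kP₀ kQ₀
    rw [hσ, hlog, (H t ht).K_diag hn (parts t ht)]
    simp only [hU, hV, hW]
    linear_combination weight α β t * α * (t - 1) * ((Q t).eval t * kP₀ - (P t).eval t * kQ₀)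
      + weight α β t * β * t * ((Q t).eval t * kP₁ - (P t).eval t * kQ₁)
end

section
/- For every real β > 0, Binet's integral formula holds: log Γ(β) + β − (β − 1/2) log β − (1/2) log(2π) = ∫_0^∞ ( 1/2 − 1/t + 1/(e^t − 1) ) · e^{−β t} / t dt, where the integrand is integrable on (0, ∞). -/
/-!
Write `R β` for the left-hand side of the formula (`stirlingRem`) and `J β` for the integral
(`binetInt`). The two sides are shown to have the same increments and the same limit along
`β, β + 1, β + 2, …`, so `R - J` is constant along this sequence and tends to `0`.

* Increments. Both `R β - R (β + 1)` and `J β - J (β + 1)` equal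
  `(β + 1/2) (log (β + 1) - log β) - 1`. For `R` this is `Γ (β + 1) = β Γ β`. For `J`, the
  difference of the two integrands at `t` is the trapezoidal-rule error of `s ↦ exp (-(β + s) t)`
  on `[0, 1]`, divided by `t`, which is `∫ s in 0..1, (1/2 - s) exp (-(β + s) t)`; Fubini reduces
  the claim to `∫ s in 0..1, (1/2 - s) / (β + s)`.
* Limits. `R (β + n + 1) → 0` follows from Euler's limit formula for `Γ` and Stirling's formula
  for `n!`. The bound `0 ≤ 1/2 - 1/t + 1/(exp t - 1) ≤ t/4` gives integrability of the integrand
  and `|J β| ≤ 1 / (4 β)`.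
-/

open MeasureTheory Real

open Filter Topology

/-- The integrand in Binet's formula. -/
noncomputable def binetFun (β t : ℝ) : ℝ :=
  (1 / 2 - 1 / t + 1 / (Real.exp t - 1)) * Real.exp (-β * t) / t

/-- Binet's integral. -/
noncomputable def binetInt (β : ℝ) : ℝ := ∫ t in Set.Ioi (0 : ℝ), binetFun β t

/-- The remainder `log Γ(β) - ((β - 1/2) log β - β + (1/2) log (2π))` in Stirling's
approximation. -/
noncomputable def stirlingRem (β : ℝ) : ℝ :=
  Real.log (Real.Gamma β) + β - (β - 1 / 2) * Real.log β - 1 / 2 * Real.log (2 * π)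

/-- Equivalent to `exp t ≤ (2 + t) / (2 - t)` on `[0, 2)`, which is the nonnegativity of
`1/2 - 1/t + 1/(exp t - 1)`. -/
lemma sub_two_mul_exp_add_nonneg {t : ℝ} (ht : 0 ≤ t) : 0 ≤ (t - 2) * Real.exp t + t + 2 := by
  have hd : ∀ x : ℝ, HasDerivAt (fun t : ℝ => (t - 2) * Real.exp t + t + 2)
      ((x - 1) * Real.exp x + 1) x := by
    intro x
    have h := ((((hasDerivAt_id x).sub_const 2).mul (Real.hasDerivAt_exp x)).add
      (hasDerivAt_id x)).add_const 2
    refine h.congr_deriv ?_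
    simp only [id]; ring
  have hm : Monotone (fun t : ℝ => (t - 2) * Real.exp t + t + 2) := by
    refine monotone_of_deriv_nonneg (fun x => (hd x).differentiableAt) fun x => ?_
    rw [(hd x).deriv]
    have h1 := Real.add_one_le_exp (-x)
    have h2 : Real.exp (-x) * Real.exp x = 1 := by rw [← Real.exp_add]; simp
    nlinarith [Real.exp_pos x]
  have := hm ht
  simp only [Real.exp_zero] at this
  linarith

lemma binet_kernel_bounds {t : ℝ} (ht : 0 < t) :
    0 ≤ 1 / 2 - 1 / t + 1 / (Real.exp t - 1) ∧
      1 / 2 - 1 / t + 1 / (Real.exp t - 1) ≤ t / 4 := by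
  have h2 := Real.quadratic_le_exp_of_nonneg ht.le
  have hE : 0 < Real.exp t - 1 := by nlinarith
  constructor
  · have h := sub_two_mul_exp_add_nonneg ht.le
    have : 1 / 2 - 1 / t + 1 / (Real.exp t - 1) =
        ((t - 2) * Real.exp t + t + 2) / (2 * t * (Real.exp t - 1)) := by
      field_simp; ring
    rw [this]; positivity
  · have h3 : 1 / (Real.exp t - 1) ≤ 1 / (t + t ^ 2 / 2) :=
      one_div_le_one_div_of_le (by positivity) (by linarith)
    have h4 : t / 4 - (1 / 2 - 1 / t + 1 / (t + t ^ 2 / 2)) = t ^ 2 / (4 * (2 + t)) := by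
      field_simp; ring
    have h5 : 0 ≤ t ^ 2 / (4 * (2 + t)) := by positivity
    linarith

lemma norm_binetFun_le (β : ℝ) {t : ℝ} (ht : 0 < t) :
    ‖binetFun β t‖ ≤ 1 / 4 * Real.exp (-β * t) := by
  obtain ⟨h0, h1⟩ := binet_kernel_bounds ht
  have he := Real.exp_pos (-β * t)
  rw [binetFun, Real.norm_of_nonneg (by positivity), div_le_iff₀ ht]
  nlinarith [mul_le_mul_of_nonneg_right h1 he.le]

lemma integrableOn_bound {β : ℝ} (hβ : 0 < β) :
    IntegrableOn (fun t : ℝ => 1 / 4 * Real.exp (-β * t)) (Set.Ioi 0) :=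
  (integrableOn_exp_mul_Ioi (by linarith) 0).const_mul _

lemma integrableOn_binetFun {β : ℝ} (hβ : 0 < β) :
    IntegrableOn (binetFun β) (Set.Ioi 0) := by
  refine Integrable.mono' (integrableOn_bound hβ) ?_ ?_
  · have : Measurable (binetFun β) := by unfold binetFun; fun_prop
    exact this.aestronglyMeasurable
  · filter_upwards [ae_restrict_mem measurableSet_Ioi] with t ht using norm_binetFun_le β ht

lemma norm_binetInt_le {β : ℝ} (hβ : 0 < β) : ‖binetInt β‖ ≤ 1 / 4 * (1 / β) := by
  have h := norm_integral_le_of_norm_le (integrableOn_bound hβ)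
    (f := binetFun β) (by
      filter_upwards [ae_restrict_mem measurableSet_Ioi] with t ht using norm_binetFun_le β ht)
  rw [integral_const_mul, integral_exp_mul_Ioi (by linarith)] at h
  simpa [binetInt] using h

/-- Both sides are the trapezoidal-rule error of `s ↦ exp (-(β + s) t)` on `[0, 1]`, divided by `t`;
the right-hand side is its Peano kernel form. -/
lemma binetFun_sub (β : ℝ) {t : ℝ} (ht : 0 < t) :
    binetFun β t - binetFun (β + 1) t =
      ∫ s in (0 : ℝ)..1, (1 / 2 - s) * Real.exp (-(β + s) * t) := by
  have hd : ∀ s : ℝ, HasDerivAt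
      (fun s : ℝ => (-(1 / 2 - s) / t + 1 / t ^ 2) * Real.exp (-(β + s) * t))
      ((1 / 2 - s) * Real.exp (-(β + s) * t)) s := by
    intro s
    have h1 : HasDerivAt (fun s : ℝ => -(1 / 2 - s) / t + 1 / t ^ 2) (1 / t) s := by
      have := ((((hasDerivAt_id s).const_sub (1 / 2)).neg).div_const t).add_const (1 / t ^ 2)
      simpa using this
    have h2 : HasDerivAt (fun s : ℝ => -(β + s) * t) (-t) s := by
      have := (((hasDerivAt_id s).const_add β).neg).mul_const t
      simpa using this
    refine (h1.mul h2.exp).congr_deriv ?_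
    field_simp; ring
  rw [intervalIntegral.integral_eq_sub_of_hasDerivAt (fun s _ => hd s)
    (Continuous.intervalIntegrable (by fun_prop) _ _)]
  have hE : Real.exp t - 1 ≠ 0 := by
    have := Real.add_one_lt_exp ht.ne'
    linarith
  have e1 : Real.exp (-(β + 1) * t) = Real.exp (-β * t) / Real.exp t := by
    rw [← Real.exp_sub]; ring_nf
  have hE' := (Real.exp_pos t).ne'
  simp only [binetFun, add_zero, e1]
  field_simp
  ring

lemma integral_half_sub_div {β : ℝ} (hβ : 0 < β) :
    ∫ s in (0 : ℝ)..1, (1 / 2 - s) * (1 / (β + s)) =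
      (β + 1 / 2) * (Real.log (β + 1) - Real.log β) - 1 := by
  have hpos : ∀ s ∈ Set.uIcc (0 : ℝ) 1, β + s ≠ 0 := by
    intro s hs
    rw [Set.uIcc_of_le zero_le_one] at hs
    linarith [hs.1]
  rw [intervalIntegral.integral_eq_sub_of_hasDerivAt
    (f := fun s => (β + 1 / 2) * Real.log (β + s) - s)]
  · simp; ring
  · intro s hs
    have h := ((((hasDerivAt_id s).const_add β).log (hpos s hs)).const_mul (β + 1 / 2)).sub
      (hasDerivAt_id s)
    refine h.congr_deriv ?_
    have := hpos s hs
    simp only [id]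
    field_simp; ring
  · apply ContinuousOn.intervalIntegrable
    refine ContinuousOn.mul (by fun_prop) (ContinuousOn.div (by fun_prop) (by fun_prop) hpos)

lemma binetInt_sub {β : ℝ} (hβ : 0 < β) :
    binetInt β - binetInt (β + 1) = (β + 1 / 2) * (Real.log (β + 1) - Real.log β) - 1 := by
  have hβ1 : 0 < β + 1 := by linarith
  have hint : Integrable (Function.uncurry fun t s : ℝ => (1 / 2 - s) * Real.exp (-(β + s) * t))
      ((volume.restrict (Set.Ioi 0)).prod (volume.restrict (Set.Ioc 0 1))) := by
    have hb : Integrable (fun p : ℝ × ℝ => Real.exp (-β * p.1) * (1 / 2 : ℝ))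
        ((volume.restrict (Set.Ioi 0)).prod (volume.restrict (Set.Ioc 0 1))) :=
      Integrable.mul_prod (f := fun t : ℝ => Real.exp (-β * t)) (g := fun _ : ℝ => (1 / 2 : ℝ))
        (integrableOn_exp_mul_Ioi (by linarith) 0) (integrable_const _)
    refine hb.mono' (Continuous.aestronglyMeasurable (by fun_prop)) ?_
    rw [Measure.prod_restrict]
    filter_upwards [ae_restrict_mem (measurableSet_Ioi.prod measurableSet_Ioc)] with p hp
    obtain ⟨ht, hs⟩ := hp
    simp only [Set.mem_Ioi, Set.mem_Ioc] at ht hs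
    simp only [Function.uncurry, norm_mul, Real.norm_eq_abs, Real.abs_exp]
    rw [mul_comm]
    refine mul_le_mul (Real.exp_le_exp.mpr ?_) ?_ (abs_nonneg _) (Real.exp_pos _).le
    · nlinarith
    · rw [abs_le]; constructor <;> linarith
  calc binetInt β - binetInt (β + 1)
      = ∫ t in Set.Ioi (0 : ℝ), (binetFun β t - binetFun (β + 1) t) :=
        (integral_sub (integrableOn_binetFun hβ) (integrableOn_binetFun hβ1)).symm
    _ = ∫ t in Set.Ioi (0 : ℝ), ∫ s in Set.Ioc (0 : ℝ) 1,
          (1 / 2 - s) * Real.exp (-(β + s) * t) := by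
        refine setIntegral_congr_fun measurableSet_Ioi fun t ht => ?_
        rw [binetFun_sub β ht, intervalIntegral.integral_of_le zero_le_one]
    _ = ∫ s in Set.Ioc (0 : ℝ) 1, ∫ t in Set.Ioi (0 : ℝ),
          (1 / 2 - s) * Real.exp (-(β + s) * t) := integral_integral_swap hint
    _ = ∫ s in (0 : ℝ)..1, (1 / 2 - s) * (1 / (β + s)) := by
        rw [intervalIntegral.integral_of_le zero_le_one]
        refine setIntegral_congr_fun measurableSet_Ioc fun s hs => ?_
        have : -(β + s) < 0 := by linarith [hs.1]
        rw [integral_const_mul, integral_exp_mul_Ioi this, mul_zero, Real.exp_zero, neg_div_neg_eq]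
    _ = _ := integral_half_sub_div hβ

lemma stirlingRem_sub {β : ℝ} (hβ : 0 < β) :
    stirlingRem β - stirlingRem (β + 1) =
      (β + 1 / 2) * (Real.log (β + 1) - Real.log β) - 1 := by
  rw [stirlingRem, stirlingRem, Real.Gamma_add_one hβ.ne',
    Real.log_mul hβ.ne' (Real.Gamma_pos_of_pos hβ).ne']
  ring

lemma log_Gamma_add_nat {x : ℝ} (hx : 0 < x) (n : ℕ) :
    Real.log (Real.Gamma (x + n)) =
      Real.log (Real.Gamma x) + ∑ m ∈ Finset.range n, Real.log (x + m) :=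
  Real.BohrMollerup.f_add_nat_eq (f := Real.log ∘ Real.Gamma) (fun {y} hy => by
    simp only [Function.comp]
    rw [Real.Gamma_add_one hy.ne', Real.log_mul hy.ne' (Real.Gamma_pos_of_pos hy).ne', add_comm])
    hx n

lemma tendsto_stirlingRem {x : ℝ} (hx : 0 < x) :
    Tendsto (fun n : ℕ => stirlingRem (x + (n + 1 : ℕ))) atTop (𝓝 0) := by
  have hG := Real.BohrMollerup.tendsto_log_gamma hx
  have hS : Tendsto (fun n => Real.log (Stirling.stirlingSeq n)) atTop (𝓝 (Real.log √π)) :=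
    Stirling.tendsto_stirlingSeq_sqrt_pi.log (by positivity)
  have hL : Tendsto (fun n : ℕ => (n : ℝ) * Real.log (1 + (x + 1) / n)) atTop (𝓝 (x + 1)) :=
    (Real.tendsto_mul_log_one_add_div_atTop (x + 1)).comp tendsto_natCast_atTop_atTop
  have hL0 : Tendsto (fun n : ℕ => Real.log (1 + (x + 1) / n)) atTop (𝓝 0) := by
    have : Tendsto (fun n : ℕ => 1 + (x + 1) / (n : ℝ)) atTop (𝓝 (1 + 0)) :=
      tendsto_const_nhds.add (tendsto_const_nhds.div_atTop tendsto_natCast_atTop_atTop)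
    simpa using this.log (by norm_num)
  -- The remainder splits into Euler's, Stirling's and the elementary logarithmic error terms.
  have hT := (((((tendsto_const_nhds (x := Real.log (Real.Gamma x))).sub hG).add
    (hS.sub_const (Real.log √π)))).sub (hL.sub_const (x + 1))).sub (hL0.const_mul (x + 1 / 2))
  simp only [sub_self, mul_zero, add_zero] at hT
  refine hT.congr' ?_
  filter_upwards [eventually_gt_atTop 0] with n hn
  have hn' : (0 : ℝ) < n := by exact_mod_cast hn
  have e1 : Real.log (1 + (x + 1) / n) = Real.log (x + (n + 1)) - Real.log n := by
    rw [← Real.log_div (by positivity) hn'.ne']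
    congr 1
    field_simp; ring
  have e2 : Real.log √π = 1 / 2 * Real.log π := by
    rw [Real.log_sqrt Real.pi_pos.le]; ring
  rw [stirlingRem, log_Gamma_add_nat hx, Stirling.log_stirlingSeq_formula, e1, e2,
    Real.BohrMollerup.logGammaSeq, Real.log_mul two_ne_zero hn'.ne',
    Real.log_mul two_ne_zero Real.pi_ne_zero, Real.log_div hn'.ne' (Real.exp_pos 1).ne',
    Real.log_exp]
  push_cast
  ring

lemma tendsto_binetInt {x : ℝ} (hx : 0 < x) :
    Tendsto (fun n : ℕ => binetInt (x + (n + 1 : ℕ))) atTop (𝓝 0) := by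
  refine squeeze_zero_norm (fun n => norm_binetInt_le (by positivity)) ?_
  have h : Tendsto (fun n : ℕ => x + ((n + 1 : ℕ) : ℝ)) atTop atTop :=
    tendsto_atTop_add_const_left _ _
      (tendsto_natCast_atTop_atTop.comp (tendsto_add_atTop_nat 1))
  have h1 := ((tendsto_const_nhds (x := (1 : ℝ))).div_atTop h).const_mul (1 / 4)
  rwa [mul_zero] at h1

lemma stirlingRem_eq_binetInt {β : ℝ} (hβ : 0 < β) : stirlingRem β = binetInt β := by
  have hper : ∀ n : ℕ, stirlingRem (β + n) - binetInt (β + n) = stirlingRem β - binetInt β := by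
    intro n
    induction n with
    | zero => simp
    | succ n ih =>
      have hpos : 0 < β + n := by positivity
      have h1 := stirlingRem_sub hpos
      have h2 := binetInt_sub hpos
      rw [Nat.cast_succ, ← add_assoc]
      linarith
  have hlim := (tendsto_stirlingRem hβ).sub (tendsto_binetInt hβ)
  simp only [hper, sub_self] at hlim
  exact sub_eq_zero.mp (tendsto_nhds_unique tendsto_const_nhds hlim)

theorem binet_formula (β : ℝ) (hβ : 0 < β) :
    IntegrableOn
      (fun t : ℝ => (1 / 2 - 1 / t + 1 / (Real.exp t - 1)) * Real.exp (-β * t) / t)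
      (Set.Ioi 0) ∧
    Real.log (Real.Gamma β) + β - (β - 1 / 2) * Real.log β - 1 / 2 * Real.log (2 * π) =
      ∫ t in Set.Ioi (0 : ℝ),
        (1 / 2 - 1 / t + 1 / (Real.exp t - 1)) * Real.exp (-β * t) / t :=
  ⟨integrableOn_binetFun hβ, stirlingRem_eq_binetInt hβ⟩
end

section
/- For all real numbers a, b with 0 < a < b, the following integral identity holds: ∫_a^b log x / √( (b−x)(x−a) ) dx = 2π log( (√a + √b)/2 ). -/
/-!
Put `p = (√a + √b) / 2` and `q = (√b - √a) / 2`, so that `a = (p - q)²`, `b = (p + q)²` and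
`0 < q < p`. The substitution `x = p² + q² - 2 p q cos θ = ‖q e^{iθ} - p‖²` satisfies
`(b - x) (x - a) = (2 p q sin θ)²`, so it turns the integral into
`∫ θ in 0..π, log ‖q e^{iθ} - p‖²`. By the symmetry `θ ↦ 2π - θ` this is `2π` times the average of
`log ‖z - p‖` over the circle `‖z‖ = q`, which equals `log p` because `p` lies outside that circle.
-/

open MeasureTheory Real intervalIntegral

lemma sq_norm_circleMap_sub (p q θ : ℝ) :
    ‖circleMap 0 q θ - (p : ℂ)‖ ^ 2 = p ^ 2 + q ^ 2 - 2 * p * q * cos θ := by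
  rw [← Complex.normSq_eq_norm_sq, Complex.normSq_apply]
  simp only [circleMap, zero_add, Complex.exp_mul_I, Complex.sub_re, Complex.sub_im,
    Complex.mul_re, Complex.mul_im, Complex.add_re, Complex.add_im, Complex.ofReal_re,
    Complex.ofReal_im, Complex.I_re, Complex.I_im, Complex.cos_ofReal_re, Complex.cos_ofReal_im,
    Complex.sin_ofReal_re, Complex.sin_ofReal_im]
  linear_combination q ^ 2 * sin_sq_add_cos_sq θ

lemma law_of_cosines_pos {p q : ℝ} (hq : 0 < q) (hqp : q < p) (θ : ℝ) :
    0 < p ^ 2 + q ^ 2 - 2 * p * q * cos θ := by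
  have hpq : 0 < p * q := by nlinarith
  nlinarith [mul_le_mul_of_nonneg_left (cos_le_one θ) hpq.le, pow_pos (sub_pos.2 hqp) 2]

/-- The mean value `circleAverage (log ‖· - p‖) 0 q = log p`, written as an integral over the
half circle. -/
lemma integral_log_law_of_cosines {p q : ℝ} (hq : 0 < q) (hqp : q < p) :
    ∫ θ in (0 : ℝ)..π, log (p ^ 2 + q ^ 2 - 2 * p * q * cos θ) = 2 * π * log p := by
  have hp : 0 < p := hq.trans hqp
  set g : ℝ → ℝ := fun θ => log (p ^ 2 + q ^ 2 - 2 * p * q * cos θ) with hg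
  have hcont : Continuous g :=
    Continuous.log (by fun_prop) fun θ => (law_of_cosines_pos hq hqp θ).ne'
  have hsymm : ∫ θ in π..(2 * π), g θ = ∫ θ in (0 : ℝ)..π, g θ := by
    have h := intervalIntegral.integral_comp_sub_left (a := 0) (b := π) g (2 * π)
    rw [show 2 * π - π = π by ring, sub_zero] at h
    rw [← h]
    simp [hg, cos_two_pi_sub]
  have hsplit := integral_add_adjacent_intervals (μ := volume)
    (hcont.intervalIntegrable 0 π) (hcont.intervalIntegrable π (2 * π))
  have havg : circleAverage (fun z => log ‖z - (p : ℂ)‖) 0 q = log p := by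
    rw [circleAverage_log_norm_sub_const_eq_log_radius_add_posLog hq.ne', zero_sub, norm_neg,
      Complex.norm_real, norm_of_nonneg hp.le, posLog_eq_log, ← log_mul hq.ne' (by positivity)]
    · congr 1
      field_simp
    · rw [abs_of_pos (by positivity), inv_mul_eq_div, one_le_div hq]
      exact hqp.le
  have hlog : ∀ θ, log ‖circleMap 0 q θ - (p : ℂ)‖ = 2⁻¹ * g θ := fun θ => by
    simp only [hg]
    rw [← sq_norm_circleMap_sub, log_pow]
    push_cast
    ring
  rw [circleAverage_def] at havg
  simp only [hlog, smul_eq_mul, intervalIntegral.integral_const_mul] at havg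
  rw [← hsplit, hsymm] at havg
  rw [← havg]
  field_simp
  ring

theorem log_integral_identity (a b : ℝ) (ha : 0 < a) (hab : a < b) :
    ∫ x in a..b, Real.log x / Real.sqrt ((b - x) * (x - a)) =
      2 * π * Real.log ((Real.sqrt a + Real.sqrt b) / 2) := by
  have hsa : 0 < √a := sqrt_pos.2 ha
  have hsab : √a < √b := sqrt_lt_sqrt ha.le hab
  obtain ⟨p, hp⟩ : ∃ p, p = (√a + √b) / 2 := ⟨_, rfl⟩
  obtain ⟨q, hq⟩ : ∃ q, q = (√b - √a) / 2 := ⟨_, rfl⟩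
  have hq0 : 0 < q := by linarith
  have hqp : q < p := by linarith
  have hpq : 0 < p * q := mul_pos (hq0.trans hqp) hq0
  have haq : a = (p - q) ^ 2 := by
    rw [show p - q = √a by linarith, sq_sqrt ha.le]
  have hbq : b = (p + q) ^ 2 := by
    rw [show p + q = √b by linarith, sq_sqrt (ha.trans hab).le]
  rw [← hp, ← integral_log_law_of_cosines hq0 hqp]
  have key := integral_comp_mul_deriv_of_deriv_nonneg (a := 0) (b := π)
    (f := fun θ => p ^ 2 + q ^ 2 - 2 * p * q * cos θ) (f' := fun θ => 2 * p * q * sin θ)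
    (g := fun x => log x / √((b - x) * (x - a)))
    (by fun_prop)
    (fun θ _ => by
      simpa using ((hasDerivAt_cos θ).const_mul (2 * p * q)).const_sub (p ^ 2 + q ^ 2))
    (fun θ hθ => by
      rw [min_eq_left pi_pos.le, max_eq_right pi_pos.le] at hθ
      have := sin_pos_of_pos_of_lt_pi hθ.1 hθ.2
      nlinarith [mul_pos hpq this])
  simp only [Function.comp_apply, cos_zero, cos_pi] at key
  rw [show p ^ 2 + q ^ 2 - 2 * p * q * 1 = a by rw [haq]; ring,
    show p ^ 2 + q ^ 2 - 2 * p * q * -1 = b by rw [hbq]; ring] at key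
  rw [← key]
  -- The integrands agree only where `sin θ ≠ 0`, that is, away from the endpoints.
  rw [integral_of_le pi_pos.le, integral_of_le pi_pos.le, integral_Ioc_eq_integral_Ioo,
    integral_Ioc_eq_integral_Ioo]
  refine setIntegral_congr_fun measurableSet_Ioo fun θ hθ => ?_
  have hs : 0 < 2 * p * q * sin θ := by
    nlinarith [mul_pos hpq (sin_pos_of_pos_of_lt_pi hθ.1 hθ.2)]
  have hsq : (b - (p ^ 2 + q ^ 2 - 2 * p * q * cos θ)) * (p ^ 2 + q ^ 2 - 2 * p * q * cos θ - a) =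
      (2 * p * q * sin θ) ^ 2 := by
    rw [haq, hbq]
    linear_combination (-4 * p ^ 2 * q ^ 2) * sin_sq_add_cos_sq θ
  simp only [hsq, sqrt_sq hs.le]
  exact div_mul_cancel₀ _ hs.ne'
end

section
/- For all real numbers a, b with 0 < a < b, the following integral identity holds: ∫_a^b log x / ( x √( (b−x)(x−a) ) ) dx = ( 2π / √(ab) ) · log( 2√(ab) / (√a + √b) ). -/
/-!
The substitution `x = 2ab / (a + b + (b - a) cos θ)`, for which `1 / x` is affine in `cos θ`, maps
`[0, π]` monotonically onto `[a, b]` and turns `dx / (x √((b - x)(x - a)))` into `dθ / √(ab)`.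
With `u = √a` and `v = √b`, the denominator satisfies
`2 (a + b + (b - a) cos θ) = ‖(u + v) + (v - u) e^{iθ}‖²`, hence
`log x = 2 log (2uv) - 2 log ‖(u + v) + (v - u) e^{iθ}‖`.
Since `v - u < u + v`, the origin is outside the circle with centre `u + v` and radius `v - u`, so the
mean of `log ‖z‖` over that circle is its value `log (u + v)` at the centre
(`integral_log_norm_circleMap`), which gives the result.
-/

open MeasureTheory Real intervalIntegral

lemma norm_circleMap_sq (p q θ : ℝ) :
    ‖circleMap (p : ℂ) q θ‖ ^ 2 = p ^ 2 + q ^ 2 + 2 * p * q * cos θ := by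
  rw [← Complex.normSq_eq_norm_sq, Complex.normSq_apply]
  simp only [circleMap, Complex.add_re, Complex.add_im, Complex.mul_re, Complex.mul_im,
    Complex.ofReal_re, Complex.ofReal_im, Complex.exp_ofReal_mul_I_re,
    Complex.exp_ofReal_mul_I_im]
  nlinarith [sin_sq_add_cos_sq θ]

lemma norm_circleMap_pos {p q : ℝ} (hq : 0 < q) (hqp : q < p) (θ : ℝ) :
    0 < ‖circleMap (p : ℂ) q θ‖ := by
  have h := norm_circleMap_sq p q θ
  have : 0 < ‖circleMap (p : ℂ) q θ‖ ^ 2 := by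
    rw [h]
    nlinarith [neg_one_le_cos θ, mul_pos hq (hq.trans hqp), sq_pos_of_pos (sub_pos.2 hqp)]
  exact (norm_nonneg _).lt_of_ne' fun h0 => by simp [h0] at this

lemma continuous_log_norm_circleMap {p q : ℝ} (hq : 0 < q) (hqp : q < p) :
    Continuous fun θ : ℝ => log ‖circleMap (p : ℂ) q θ‖ :=
  (continuous_circleMap _ _).norm.log fun θ => (norm_circleMap_pos hq hqp θ).ne'

/-- Mean value property of `log ‖z‖` on a circle not enclosing the origin. As the centre is real,
the integrand is symmetric about `θ = π`, so the upper half circle suffices. -/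
lemma integral_log_norm_circleMap {p q : ℝ} (hq : 0 < q) (hqp : q < p) :
    ∫ θ in (0 : ℝ)..π, log ‖circleMap (p : ℂ) q θ‖ = π * log p := by
  have hp := hq.trans hqp
  have hc := continuous_log_norm_circleMap hq hqp
  have h := circleAverage_log_norm_sub_const_eq_log_radius_add_posLog (a := 0) (c := (p : ℂ)) hq.ne'
  have hratio : 1 ≤ q⁻¹ * p := by
    rw [inv_mul_eq_div, le_div_iff₀ hq]; linarith
  rw [circleAverage_def] at h
  simp only [sub_zero, Complex.norm_real, norm_of_nonneg hp.le, smul_eq_mul] at h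
  rw [posLog_eq_log (by rwa [abs_of_pos (by positivity)]), log_mul (by positivity) hp.ne',
    log_inv, add_neg_cancel_left] at h
  have hsym : ∫ θ in π..(2 * π), log ‖circleMap (p : ℂ) q θ‖
      = ∫ θ in (0 : ℝ)..π, log ‖circleMap (p : ℂ) q θ‖ := by
    have h1 := intervalIntegral.integral_comp_sub_left (a := 0) (b := π)
      (fun θ => log ‖circleMap (p : ℂ) q θ‖) (2 * π)
    rw [show 2 * π - π = π by ring, sub_zero] at h1
    rw [← h1]
    refine intervalIntegral.integral_congr fun θ _ => ?_
    have : ‖circleMap (p : ℂ) q (2 * π - θ)‖ = ‖circleMap (p : ℂ) q θ‖ := by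
      rw [← sq_eq_sq₀ (norm_nonneg _) (norm_nonneg _), norm_circleMap_sq, norm_circleMap_sq,
        cos_two_pi_sub]
    simp only [this]
  rw [← intervalIntegral.integral_add_adjacent_intervals (hc.intervalIntegrable 0 π)
    (hc.intervalIntegrable π (2 * π)), hsym, inv_mul_eq_div, div_eq_iff (by positivity)] at h
  linarith

theorem log_over_x_integral_identity (a b : ℝ) (ha : 0 < a) (hab : a < b) :
    ∫ x in a..b, Real.log x / (x * Real.sqrt ((b - x) * (x - a))) =
      2 * π / Real.sqrt (a * b) *
        Real.log (2 * Real.sqrt (a * b) / (Real.sqrt a + Real.sqrt b)) := by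
  obtain ⟨u, hu, rfl⟩ : ∃ u : ℝ, 0 < u ∧ a = u ^ 2 := ⟨√a, sqrt_pos.2 ha, (sq_sqrt ha.le).symm⟩
  obtain ⟨v, hv, rfl⟩ : ∃ v : ℝ, 0 < v ∧ b = v ^ 2 :=
    ⟨√b, sqrt_pos.2 (ha.trans hab), (sq_sqrt (ha.trans hab).le).symm⟩
  have huv : u < v := lt_of_pow_lt_pow_left₀ 2 hv.le hab
  have hq : 0 < v - u := sub_pos.2 huv
  have hqp : v - u < u + v := by linarith
  rw [← mul_pow, sqrt_sq hu.le, sqrt_sq hv.le, sqrt_sq (by positivity)]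
  set D : ℝ → ℝ := fun θ => u ^ 2 + v ^ 2 + (v ^ 2 - u ^ 2) * cos θ with hD
  have hDn : ∀ θ, 2 * D θ = ‖circleMap ((u + v : ℝ) : ℂ) (v - u) θ‖ ^ 2 := fun θ => by
    rw [norm_circleMap_sq]; simp only [hD]; ring
  have hD0 : ∀ θ, 0 < D θ := fun θ => by
    have := pow_pos (norm_circleMap_pos hq hqp θ) 2
    rw [← hDn] at this; linarith
  set f : ℝ → ℝ := fun θ => 2 * u ^ 2 * v ^ 2 / D θ with hf
  set f' : ℝ → ℝ := fun θ => 2 * u ^ 2 * v ^ 2 * (v ^ 2 - u ^ 2) * sin θ / D θ ^ 2 with hf'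
  have hderiv : ∀ θ, HasDerivAt f (f' θ) θ := fun θ => by
    have h1 : HasDerivAt D ((v ^ 2 - u ^ 2) * (-sin θ)) θ :=
      ((hasDerivAt_cos θ).const_mul _).const_add _
    convert! (hasDerivAt_const θ (2 * u ^ 2 * v ^ 2)).div h1 (hD0 θ).ne' using 1
    simp only [hf']; ring
  have hf0 : f 0 = u ^ 2 := by
    simp only [hf, hD, cos_zero]
    rw [div_eq_iff (by ring_nf; positivity)]; ring
  have hfpi : f π = v ^ 2 := by
    simp only [hf, hD, cos_pi]
    rw [div_eq_iff (by ring_nf; positivity)]; ring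
  have hsub := integral_Icc_deriv_smul_of_deriv_nonneg (a := 0) (b := π) (f := f) (f' := f')
    (g := fun x => log x / (x * √((v ^ 2 - x) * (x - u ^ 2))))
    (fun θ _ => (hderiv θ).continuousAt.continuousWithinAt) (fun θ _ => hderiv θ)
    (fun θ hθ => by
      have := sin_pos_of_mem_Ioo hθ
      have := sub_pos.2 hab
      simp only [hf']; positivity) pi_pos.le
  rw [hf0, hfpi, integral_Icc_eq_integral_Ioo,
    integral_Icc_eq_integral_Ioc (x := u ^ 2), ← intervalIntegral.integral_of_le hab.le] at hsub
  have hpt : ∀ θ ∈ Set.Ioo 0 π, f' θ • (log (f θ) / (f θ * √((v ^ 2 - f θ) * (f θ - u ^ 2))))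
      = 2 / (u * v) * (log (2 * (u * v)) - log ‖circleMap ((u + v : ℝ) : ℂ) (v - u) θ‖) := by
    intro θ hθ
    have hs := sin_pos_of_mem_Ioo hθ
    have hd := hD0 θ
    have hvu := sub_pos.2 hab
    have hN := norm_circleMap_pos hq hqp θ
    have hlog : log (f θ) = 2 * (log (2 * (u * v))
        - log ‖circleMap ((u + v : ℝ) : ℂ) (v - u) θ‖) := by
      rw [← log_div (by positivity) hN.ne']
      have h2 : f θ = (2 * (u * v) / ‖circleMap ((u + v : ℝ) : ℂ) (v - u) θ‖) ^ 2 := by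
        rw [div_pow, ← hDn]
        simp only [hf]; field_simp
      rw [h2, log_pow]; norm_num
    have hsqrt : √((v ^ 2 - f θ) * (f θ - u ^ 2)) = u * v * (v ^ 2 - u ^ 2) * sin θ / D θ := by
      rw [← sqrt_sq (show 0 ≤ u * v * (v ^ 2 - u ^ 2) * sin θ / D θ by positivity)]
      congr 1
      have e1 : v ^ 2 - f θ = v ^ 2 * (v ^ 2 - u ^ 2) * (1 + cos θ) / D θ := by
        rw [eq_div_iff hd.ne', sub_mul, div_mul_cancel₀ _ hd.ne']; simp only [hD]; ring
      have e2 : f θ - u ^ 2 = u ^ 2 * (v ^ 2 - u ^ 2) * (1 - cos θ) / D θ := by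
        rw [eq_div_iff hd.ne', sub_mul, div_mul_cancel₀ _ hd.ne']; simp only [hD]; ring
      rw [e1, e2, div_pow, mul_pow _ (sin θ), sin_sq]
      ring
    rw [hsqrt, hlog, smul_eq_mul]
    simp only [hf', hf]
    field_simp
  rw [← hsub, setIntegral_congr_fun measurableSet_Ioo hpt, ← integral_Ioc_eq_integral_Ioo,
    ← intervalIntegral.integral_of_le pi_pos.le, intervalIntegral.integral_const_mul,
    intervalIntegral.integral_sub intervalIntegrable_const
      ((continuous_log_norm_circleMap hq hqp).intervalIntegrable _ _),
    integral_log_norm_circleMap hq hqp, intervalIntegral.integral_const,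
    log_div (by positivity) (by positivity), smul_eq_mul]
  ring
end
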